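/- arXiv:2001.11061 — 4 statements merged into one kernel-verified Lean document; each statement's English description precedes it below -/
import Mathlib

section
/- Let d ≥ 0, n = 3+d, write y = (y₁,y₂,y₃,y'') ∈ ℝ³ × ℝ^d, and let m < −1. Let a₁, a₂ : ℝ × ℝ^{n−1} → ℂ be symbols of order m with smooth parameters, and define v₁(y) = ∫_ℝ e^{i y₁ η} a₁(η, (y₂,y₃,y'')) dη, v₂(y) = ∫_ℝ e^{i y₂ η} a₂(η, (y₁,y₃,y'')) dη, and w₁₂(y) = ∫_{ℝ²} e^{i(y₁η₁+y₂η₂)} a₁(η₁,(0,y₃,y'')) a₂(η₂,(0,y₃,y'')) dη₁dη₂ (all integrals absolutely convergent since m < −1). Then for every φ ∈ C_c^∞(ℝⁿ), every k₃ ≥ 0 and every δ > 0 there are measurable e₁, e₂ with 𝓕(φ·(v₁v₂ − w₁₂)) = e₁ + e₂ such that W_{−m+1/2, −m−1/2, k₃, δ}·e₁ ∈ L²(ℝⁿ) and W_{−m−1/2, −m+1/2, k₃, δ}·e₂ ∈ L²(ℝⁿ). -/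
open MeasureTheory
open scoped RealInnerProductSpace

noncomputable section

/-- Space `ℝⁿ` with `n = 3 + d`, written as `y = (y₁, y₂, y₃, y'')`. -/
abbrev Sp (d : ℕ) : Type := ℝ × ℝ × ℝ × EuclideanSpace ℝ (Fin d)

/-- The parameter space `ℝ^{n-1} = ℝ² × ℝᵈ`. -/
abbrev Par (d : ℕ) : Type := ℝ × ℝ × EuclideanSpace ℝ (Fin d)

/-- A symbol of order `m` with smooth parameters: `a(η, w)` is smooth and every
mixed derivative `∂_w^α ∂_η^β a` is bounded by `C (1+|η|)^{m-β}`. -/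
def IsSymbolP (d : ℕ) (m : ℝ) (a : ℝ × Par d → ℂ) : Prop :=
  ContDiff ℝ (⊤ : ℕ∞) a ∧ ∀ α β : ℕ, ∃ C : ℝ, ∀ (η : ℝ) (w : Par d),
    ‖iteratedFDeriv ℝ α (fun w' => iteratedDeriv β (fun η' => a (η', w')) η) w‖ ≤
      C * (1 + |η|) ^ (m - β)

/-- The anisotropic weight
`W_{k₁,k₂,k₃,δ}(η) = ⟨(η₁,η'')⟩^{k₁} ⟨(η₂,η'')⟩^{k₂} ⟨(η₃,η'')⟩^{k₃} ⟨η⟩^{-δ}`. -/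
def W (d : ℕ) (k₁ k₂ k₃ δ : ℝ) (η : Sp d) : ℝ :=
  (1 + η.1 ^ 2 + ‖η.2.2.2‖ ^ 2) ^ (k₁ / 2) *
  (1 + η.2.1 ^ 2 + ‖η.2.2.2‖ ^ 2) ^ (k₂ / 2) *
  (1 + η.2.2.1 ^ 2 + ‖η.2.2.2‖ ^ 2) ^ (k₃ / 2) *
  (1 + η.1 ^ 2 + η.2.1 ^ 2 + η.2.2.1 ^ 2 + ‖η.2.2.2‖ ^ 2) ^ (-δ / 2)

/-- The Euclidean pairing `⟨y, η⟩` on `ℝⁿ = ℝ³ × ℝᵈ`. -/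
def pairing (d : ℕ) (y η : Sp d) : ℝ :=
  y.1 * η.1 + y.2.1 * η.2.1 + y.2.2.1 * η.2.2.1 + ⟪y.2.2.2, η.2.2.2⟫

/-- The Fourier transform `𝓕u(η) = ∫ e^{-i⟨y,η⟩} u(y) dy`. -/
def FT (d : ℕ) (u : Sp d → ℂ) (η : Sp d) : ℂ :=
  ∫ y : Sp d, Complex.exp (-(Complex.I * (pairing d y η : ℂ))) * u y ∂volume

/-- The conormal wave `v₁(y) = ∫ e^{i y₁ η} a(η, (y₂,y₃,y'')) dη`. -/
def v1 (d : ℕ) (a : ℝ × Par d → ℂ) (y : Sp d) : ℂ :=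
  ∫ η : ℝ, Complex.exp (Complex.I * ((y.1 * η : ℝ) : ℂ)) * a (η, (y.2.1, y.2.2.1, y.2.2.2))

/-- The conormal wave `v₂(y) = ∫ e^{i y₂ η} a(η, (y₁,y₃,y'')) dη`. -/
def v2 (d : ℕ) (a : ℝ × Par d → ℂ) (y : Sp d) : ℂ :=
  ∫ η : ℝ, Complex.exp (Complex.I * ((y.2.1 * η : ℝ) : ℂ)) * a (η, (y.1, y.2.2.1, y.2.2.2))

/-- The product-type conormal distribution
`w₁₂(y) = ∫_{ℝ²} e^{i(y₁η₁+y₂η₂)} a₁(η₁,(0,y₃,y'')) a₂(η₂,(0,y₃,y'')) dη₁dη₂`. -/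
def w12 (d : ℕ) (a₁ a₂ : ℝ × Par d → ℂ) (y : Sp d) : ℂ :=
  ∫ η : ℝ × ℝ,
    Complex.exp (Complex.I * ((y.1 * η.1 + y.2.1 * η.2 : ℝ) : ℂ)) *
      a₁ (η.1, ((0 : ℝ), y.2.2.1, y.2.2.2)) * a₂ (η.2, ((0 : ℝ), y.2.2.1, y.2.2.2))

/-!
Freezing the parameter `y₂` of the first symbol and the parameter `y₁` of the second one at `0`
turns `v₁ v₂` into `w₁₂`, so `v₁ v₂ - w₁₂` is a sum of two terms in each of which one wave has
been replaced by its difference with the frozen wave. By Hadamard's lemma this difference is `y₂`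
(resp. `y₁`) times an oscillatory integral of the same order, averaged over the dilations of the
parameter. The factor `y₂` (resp. `y₁`) is absorbed by the other wave, whose phase it belongs to:
integrating by parts trades it for a frequency derivative of the symbol, which lowers the order by
one. Finally, the Fourier transform of a cutoff times a product of two such waves of orders `m₁`
and `m₂` is a convolution of the symbols with a rapidly decreasing function, hence decays like
`(1 + |η₁|) ^ m₁ (1 + |η₂|) ^ m₂` and rapidly in `(η₃, η'')`.
-/

open scoped ContDiff FourierTransform

section Elementary

lemma rpow_one_add_norm_mul_le {E : Type*} [SeminormedAddCommGroup E] {m : ℝ} (hm : m ≤ 0)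
    (x y : E) : (1 + ‖x‖) ^ m * (1 + ‖y‖) ^ m ≤ (1 + ‖x + y‖) ^ m := by
  rw [← Real.mul_rpow (by positivity) (by positivity)]
  refine Real.rpow_le_rpow_of_nonpos (by positivity) ?_ hm
  nlinarith [norm_add_le x y, mul_nonneg (norm_nonneg x) (norm_nonneg y)]

lemma integrable_rpow_one_add_abs {m : ℝ} (hm : m < -1) :
    Integrable fun x : ℝ => (1 + |x|) ^ m := by
  simpa using integrable_one_add_norm (E := ℝ) (μ := volume) (r := -m) (by simp; linarith)

lemma rpow_one_add_abs_mul_sub_le {m : ℝ} (hm : m ≤ 0) (s x θ : ℝ) :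
    (1 + |θ|) ^ m * (1 + |x - θ|) ^ (m + s) ≤ (1 + |x|) ^ m * (1 + |x - θ|) ^ s := by
  rw [Real.rpow_add (by positivity), ← mul_assoc]
  gcongr
  simpa using rpow_one_add_norm_mul_le hm θ (x - θ)

lemma integrable_rpow_one_add_abs_mul_sub {m s : ℝ} (hm : m ≤ 0) (hs : s < -1) (x : ℝ) :
    Integrable fun θ : ℝ => (1 + |θ|) ^ m * (1 + |x - θ|) ^ (m + s) := by
  refine (((integrable_rpow_one_add_abs hs).comp_sub_left x).const_mul ((1 + |x|) ^ m)).mono'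
    (by fun_prop) (.of_forall fun θ => ?_)
  rw [Real.norm_of_nonneg (by positivity)]
  exact rpow_one_add_abs_mul_sub_le hm s x θ

lemma integral_rpow_one_add_abs_mul_sub_le {m s : ℝ} (hm : m ≤ 0) (hs : s < -1) (x : ℝ) :
    ∫ θ : ℝ, (1 + |θ|) ^ m * (1 + |x - θ|) ^ (m + s) ≤
      (∫ θ : ℝ, (1 + |θ|) ^ s) * (1 + |x|) ^ m := by
  calc ∫ θ : ℝ, (1 + |θ|) ^ m * (1 + |x - θ|) ^ (m + s)
      ≤ ∫ θ : ℝ, (1 + |x|) ^ m * (1 + |x - θ|) ^ s :=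
        integral_mono (integrable_rpow_one_add_abs_mul_sub hm hs x)
          (((integrable_rpow_one_add_abs hs).comp_sub_left x).const_mul _)
          (rpow_one_add_abs_mul_sub_le hm s x)
    _ = (∫ θ : ℝ, (1 + |θ|) ^ s) * (1 + |x|) ^ m := by
        rw [integral_const_mul, integral_sub_left_eq_self (fun θ : ℝ => (1 + |θ|) ^ s), mul_comm]

end Elementary

section DerivativeBounds

variable {E F : Type*} [NormedAddCommGroup E] [NormedSpace ℝ E] [NormedAddCommGroup F]
  [NormedSpace ℝ F]

lemma norm_iteratedFDeriv_comp_clm_le {G : Type*} [NormedAddCommGroup G] [NormedSpace ℝ G]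
    {f : F → G} (hf : ContDiff ℝ ∞ f) (L : E →L[ℝ] F) (k : ℕ) (y : E) :
    ‖iteratedFDeriv ℝ k (fun x => f (L x)) y‖ ≤ ‖iteratedFDeriv ℝ k f (L y)‖ * ‖L‖ ^ k := by
  have h := L.iteratedFDeriv_comp_right hf y (i := k) (mod_cast le_top)
  simp only [Function.comp_def] at h
  simpa [h] using (iteratedFDeriv ℝ k f (L y)).norm_compContinuousLinearMap_le fun _ => L

lemma norm_iteratedFDeriv_mul_le_of_forall_le {f g : E → ℂ} (hf : ContDiff ℝ ∞ f)
    (hg : ContDiff ℝ ∞ g) {n : ℕ} {A B : ℝ} {y : E}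
    (hA : ∀ k ≤ n, ‖iteratedFDeriv ℝ k f y‖ ≤ A) (hB : ∀ k ≤ n, ‖iteratedFDeriv ℝ k g y‖ ≤ B) :
    ‖iteratedFDeriv ℝ n (fun x => f x * g x) y‖ ≤ 2 ^ n * A * B := by
  have hA₀ : 0 ≤ A := (norm_nonneg _).trans (hA 0 n.zero_le)
  calc ‖iteratedFDeriv ℝ n (fun x => f x * g x) y‖
      ≤ ∑ i ∈ Finset.range (n + 1), (n.choose i : ℝ) * ‖iteratedFDeriv ℝ i f y‖ *
          ‖iteratedFDeriv ℝ (n - i) g y‖ :=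
        norm_iteratedFDeriv_mul_le hf hg y (mod_cast le_top)
    _ ≤ ∑ i ∈ Finset.range (n + 1), (n.choose i : ℝ) * A * B := by
        gcongr with i hi
        · exact hA i (Finset.mem_range_succ_iff.mp hi)
        · exact hB (n - i) (n.sub_le i)
    _ = 2 ^ n * A * B := by
        rw [← Finset.sum_mul, ← Finset.sum_mul]
        exact_mod_cast congrArg (fun c : ℕ => (c : ℝ) * A * B) (Nat.sum_range_choose n)

end DerivativeBounds

section Fourier

variable {d : ℕ}

/-- The pairing on `Sp d` as a continuous bilinear map. -/
def pairingL (d : ℕ) : Sp d →L[ℝ] Sp d →L[ℝ] ℝ :=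
  let p₁ : Sp d →L[ℝ] ℝ := .fst ℝ _ _
  let p₂ : Sp d →L[ℝ] ℝ := .fst ℝ _ _ ∘L .snd ℝ _ _
  let p₃ : Sp d →L[ℝ] ℝ := .fst ℝ _ _ ∘L .snd ℝ _ _ ∘L .snd ℝ _ _
  let p₄ : Sp d →L[ℝ] EuclideanSpace ℝ (Fin d) := .snd ℝ _ _ ∘L .snd ℝ _ _ ∘L .snd ℝ _ _
  (ContinuousLinearMap.mul ℝ ℝ).bilinearComp p₁ p₁ +
    (ContinuousLinearMap.mul ℝ ℝ).bilinearComp p₂ p₂ +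
    (ContinuousLinearMap.mul ℝ ℝ).bilinearComp p₃ p₃ +
    (isBoundedBilinearMap_inner (𝕜 := ℝ)).toContinuousLinearMap.bilinearComp p₄ p₄

lemma pairingL_apply (y η : Sp d) : pairingL d y η = pairing d y η := by
  simp [pairingL, pairing]

lemma continuous_pairing : Continuous fun z : Sp d × Sp d => pairing d z.1 z.2 := by
  simpa only [Function.uncurry_def, pairingL_apply] using (pairingL d).continuous₂

lemma pairing_add_right (y η η' : Sp d) :
    pairing d y (η + η') = pairing d y η + pairing d y η' := by
  simp only [← pairingL_apply, map_add]

lemma pairing_sub_right (y η η' : Sp d) :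
    pairing d y (η - η') = pairing d y η - pairing d y η' := by
  simp only [← pairingL_apply, map_sub]

instance isAddHaarMeasure_volume_sp : (volume : Measure (Sp d)).IsAddHaarMeasure :=
  have : (volume : Measure (ℝ × EuclideanSpace ℝ (Fin d))).IsAddHaarMeasure :=
    Measure.prod.instIsAddHaarMeasure _ _
  have : (volume : Measure (ℝ × ℝ × EuclideanSpace ℝ (Fin d))).IsAddHaarMeasure :=
    Measure.prod.instIsAddHaarMeasure _ _
  Measure.prod.instIsAddHaarMeasure _ _

lemma FT_eq_fourierIntegral (g : Sp d → ℂ) :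
    FT d g = VectorFourier.fourierIntegral 𝐞 volume
      ((2 * Real.pi)⁻¹ • pairingL d).toLinearMap₁₂ g := by
  ext ξ
  refine integral_congr_ae (.of_forall fun y => ?_)
  have hphase : ((2 * Real.pi)⁻¹ • pairingL d).toLinearMap₁₂ y ξ =
      (2 * Real.pi)⁻¹ * pairing d y ξ := by
    rw [← pairingL_apply]
    rfl
  have hcancel : 2 * Real.pi * -((2 * Real.pi)⁻¹ * pairing d y ξ) = -pairing d y ξ := by
    field_simp
  simp only [hphase, Circle.smul_def, Real.fourierChar_apply, hcancel, smul_eq_mul]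
  congr 2
  push_cast
  ring

lemma continuous_FT {g : Sp d → ℂ} (hg : Integrable g) : Continuous (FT d g) := by
  rw [FT_eq_fourierIntegral]
  exact VectorFourier.fourierIntegral_continuous Real.continuous_fourierChar
    (by exact ((2 * Real.pi)⁻¹ • pairingL d).continuous₂) hg

lemma FT_add {f g : Sp d → ℂ} (hf : Integrable f) (hg : Integrable g) :
    FT d (f + g) = FT d f + FT d g := by
  simp only [FT_eq_fourierIntegral]
  exact VectorFourier.fourierIntegral_add Real.continuous_fourierChar
    (by exact ((2 * Real.pi)⁻¹ • pairingL d).continuous₂) hf hg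

end Fourier

section FourierDecay

variable {d : ℕ}

lemma integral_norm_iteratedFDeriv_le {E : Type*} [NormedAddCommGroup E] [NormedSpace ℝ E]
    [MeasurableSpace E] [BorelSpace E] {μ : Measure E} [IsFiniteMeasureOnCompacts μ] {K : Set E}
    (hK : IsCompact K) {g : E → ℂ} (hgK : tsupport g ⊆ K) {M : ℝ} {k : ℕ}
    (hM : ∀ y, ‖iteratedFDeriv ℝ k g y‖ ≤ M) :
    ∫ y, ‖iteratedFDeriv ℝ k g y‖ ∂μ ≤ M * μ.real K := by
  have hzero : ∀ y ∉ K, ‖iteratedFDeriv ℝ k g y‖ = 0 := fun y hy => by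
    rw [norm_eq_zero]
    exact Function.notMem_support.mp fun h => hy (hgK (support_iteratedFDeriv_subset k h))
  rw [← setIntegral_eq_integral_of_forall_compl_eq_zero hzero]
  exact (Real.le_norm_self _).trans <| norm_setIntegral_le_of_norm_le_const hK.measure_lt_top
    fun y _ => by simpa only [norm_norm] using hM y

lemma pow_abs_pairing_mul_norm_FT_le {K : Set (Sp d)} (hK : IsCompact K) {g : Sp d → ℂ}
    (hg : ContDiff ℝ ∞ g) (hgK : tsupport g ⊆ K) {n : ℕ} {M : ℝ}
    (hM : ∀ k ≤ n, ∀ y, ‖iteratedFDeriv ℝ k g y‖ ≤ M) {v : Sp d} (hv : ‖v‖ ≤ 1) (ξ : Sp d) :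
    |pairing d v ξ| ^ n * ‖FT d g ξ‖ ≤ (4 * Real.pi) ^ n * ((n + 1) * volume.real K) * M := by
  have hgc : HasCompactSupport g := hK.of_isClosed_subset (isClosed_tsupport g) hgK
  have hint : ∀ k j : ℕ, (k : ℕ∞) ≤ 0 → (j : ℕ∞) ≤ ⊤ →
      Integrable fun y => ‖y‖ ^ k * ‖iteratedFDeriv ℝ j g y‖ := fun k j _ _ =>
    ((continuous_norm.pow k).mul
      (hg.continuous_iteratedFDeriv (mod_cast le_top)).norm).integrable_of_hasCompactSupport
        (hgc.iteratedFDeriv j).norm.mul_left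
  have hparts := VectorFourier.pow_mul_norm_iteratedFDeriv_fourierIntegral_le
    ((2 * Real.pi)⁻¹ • pairingL d) (μ := volume) (K := 0) (N := ⊤) hg hint (k := 0) (n := n)
    (by simp) (by simp) v ξ
  have hphase : ((2 * Real.pi)⁻¹ • pairingL d) v ξ = (2 * Real.pi)⁻¹ * pairing d v ξ := by
    rw [← pairingL_apply]
    rfl
  rw [norm_iteratedFDeriv_zero, ← FT_eq_fourierIntegral, hphase] at hparts
  have hsum : ∑ p ∈ Finset.range (0 + 1) ×ˢ Finset.range (n + 1),
      ∫ y, ‖y‖ ^ p.1 * ‖iteratedFDeriv ℝ p.2 g y‖ ≤ (n + 1) * (M * volume.real K) := by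
    rw [Finset.sum_product, zero_add, Finset.sum_range_one]
    simp only [pow_zero, one_mul]
    refine (Finset.sum_le_card_nsmul _ _ (M * volume.real K) fun k hk => ?_).trans_eq (by simp)
    exact integral_norm_iteratedFDeriv_le hK hgK (hM k (Finset.mem_range_succ_iff.mp hk))
  calc |pairing d v ξ| ^ n * ‖FT d g ξ‖
      = (2 * Real.pi) ^ n * (|(2 * Real.pi)⁻¹ * pairing d v ξ| ^ n * ‖FT d g ξ‖) := by
        rw [abs_mul, abs_of_pos (by positivity : 0 < (2 * Real.pi)⁻¹), ← mul_assoc, ← mul_pow,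
          mul_inv_cancel_left₀ (by positivity)]
    _ ≤ (2 * Real.pi) ^ n * (1 ^ n * 2 ^ n * ((n + 1) * (M * volume.real K))) := by
        refine mul_le_mul_of_nonneg_left (hparts.trans ?_) (by positivity)
        simp only [pow_zero, mul_one, Nat.cast_zero, mul_zero, zero_add] at hsum ⊢
        gcongr
    _ = (4 * Real.pi) ^ n * ((n + 1) * volume.real K) * M := by
        rw [show (4 : ℝ) * Real.pi = 2 * Real.pi * 2 by ring, mul_pow (2 * Real.pi)]
        ring

lemma exists_abs_pairing_eq_norm (ξ : Sp d) : ∃ v : Sp d, ‖v‖ ≤ 1 ∧ |pairing d v ξ| = ‖ξ‖ := by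
  obtain ⟨x₁, x₂, x₃, x⟩ := ξ
  have hmax : ‖(x₁, x₂, x₃, x)‖ = |x₁| ∨ ‖(x₁, x₂, x₃, x)‖ = |x₂| ∨ ‖(x₁, x₂, x₃, x)‖ = |x₃| ∨
      ‖(x₁, x₂, x₃, x)‖ = ‖x‖ := by
    simp only [Prod.norm_def, Real.norm_eq_abs]
    grind
  rcases hmax with h | h | h | h <;> rw [h]
  · exact ⟨(1, 0, 0, 0), by simp [Prod.norm_def], by simp [pairing]⟩
  · exact ⟨(0, 1, 0, 0), by simp [Prod.norm_def], by simp [pairing]⟩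
  · exact ⟨(0, 0, 1, 0), by simp [Prod.norm_def], by simp [pairing]⟩
  · refine ⟨(0, 0, 0, ‖x‖⁻¹ • x), by simp [Prod.norm_def, norm_smul, inv_mul_le_one], ?_⟩
    rcases eq_or_ne x 0 with rfl | hx
    · simp [pairing]
    · simp [pairing, real_inner_smul_left, pow_two, hx]

theorem exists_norm_FT_le {K : Set (Sp d)} (hK : IsCompact K) (N : ℕ) :
    ∃ C, 0 ≤ C ∧ ∀ (g : Sp d → ℂ) (M : ℝ), ContDiff ℝ ∞ g → tsupport g ⊆ K →
      (∀ k ≤ N, ∀ y, ‖iteratedFDeriv ℝ k g y‖ ≤ M) →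
      ∀ ξ, ‖FT d g ξ‖ ≤ C * M * (1 + ‖ξ‖) ^ (-N : ℝ) := by
  let D : ℕ → ℝ := fun n => (4 * Real.pi) ^ n * ((n + 1) * volume.real K)
  refine ⟨2 ^ (N - 1) * (D 0 + D N), by positivity, fun g M hg hgK hM ξ => ?_⟩
  obtain ⟨v, hv, hvξ⟩ := exists_abs_pairing_eq_norm ξ
  have h₀ : ‖FT d g ξ‖ ≤ D 0 * M := by
    simpa [D] using pow_abs_pairing_mul_norm_FT_le hK hg hgK
      (fun k hk => hM k (hk.trans N.zero_le)) hv ξ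
  have hN : ‖ξ‖ ^ N * ‖FT d g ξ‖ ≤ D N * M := by
    simpa [hvξ] using pow_abs_pairing_mul_norm_FT_le hK hg hgK hM hv ξ
  rw [Real.rpow_neg (by positivity), Real.rpow_natCast, ← div_eq_mul_inv,
    le_div_iff₀' (by positivity)]
  calc (1 + ‖ξ‖) ^ N * ‖FT d g ξ‖
      ≤ 2 ^ (N - 1) * (1 ^ N + ‖ξ‖ ^ N) * ‖FT d g ξ‖ := by
        gcongr
        exact add_pow_le zero_le_one (norm_nonneg ξ) N
    _ = 2 ^ (N - 1) * (‖FT d g ξ‖ + ‖ξ‖ ^ N * ‖FT d g ξ‖) := by ring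
    _ ≤ 2 ^ (N - 1) * (D 0 * M + D N * M) := by gcongr
    _ = 2 ^ (N - 1) * (D 0 + D N) * M := by ring

end FourierDecay

section Amplitudes

/-- A family `p t` of smooth functions, continuous in the parameter `t`, each of whose derivatives
is bounded by a multiple of `b t`. It plays the role of a symbol of which only the growth `b` in
the frequency variables contained in `t` is recorded. -/
structure IsAmplitude {T E : Type*} [TopologicalSpace T] [NormedAddCommGroup E] [NormedSpace ℝ E]
    (b : T → ℝ) (p : T → E → ℂ) : Prop where
  weight_nonneg : ∀ t, 0 ≤ b t
  continuous : Continuous fun z : T × E => p z.1 z.2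
  contDiff : ∀ t, ContDiff ℝ ∞ (p t)
  exists_norm_iteratedFDeriv_le : ∀ k : ℕ, ∃ C, ∀ t y, ‖iteratedFDeriv ℝ k (p t) y‖ ≤ C * b t

variable {T E : Type*} [TopologicalSpace T] [NormedAddCommGroup E] [NormedSpace ℝ E]
  {b : T → ℝ} {p : T → E → ℂ}

namespace IsAmplitude

lemma exists_forall_le (hp : IsAmplitude b p) (n : ℕ) :
    ∃ C, 0 ≤ C ∧ ∀ k ≤ n, ∀ t y, ‖iteratedFDeriv ℝ k (p t) y‖ ≤ C * b t := by
  choose C hC using hp.exists_norm_iteratedFDeriv_le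
  refine ⟨∑ k ∈ Finset.range (n + 1), |C k|, by positivity, fun k hk t y => (hC k t y).trans ?_⟩
  refine mul_le_mul_of_nonneg_right ((le_abs_self _).trans ?_) (hp.weight_nonneg t)
  exact Finset.single_le_sum (f := fun k => |C k|) (fun _ _ => abs_nonneg _)
    (Finset.mem_range_succ_iff.mpr hk)

lemma exists_norm_le (hp : IsAmplitude b p) : ∃ C, 0 ≤ C ∧ ∀ t y, ‖p t y‖ ≤ C * b t := by
  obtain ⟨C, hC₀, hC⟩ := hp.exists_forall_le 0
  exact ⟨C, hC₀, fun t y => by simpa using hC 0 le_rfl t y⟩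

lemma mul {c : T → ℝ} {q : T → E → ℂ} (hp : IsAmplitude b p) (hq : IsAmplitude c q) :
    IsAmplitude (fun t => b t * c t) fun t y => p t y * q t y where
  weight_nonneg t := mul_nonneg (hp.weight_nonneg t) (hq.weight_nonneg t)
  continuous := hp.continuous.mul hq.continuous
  contDiff t := (hp.contDiff t).mul (hq.contDiff t)
  exists_norm_iteratedFDeriv_le k := by
    obtain ⟨A, -, hA⟩ := hp.exists_forall_le k
    obtain ⟨B, -, hB⟩ := hq.exists_forall_le k
    refine ⟨2 ^ k * A * B, fun t y => ?_⟩
    refine (norm_iteratedFDeriv_mul_le_of_forall_le (hp.contDiff t) (hq.contDiff t)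
      (fun j hj => hA j hj t y) fun j hj => hB j hj t y).trans_eq ?_
    ring

lemma comp_param {S : Type*} [TopologicalSpace S] (hp : IsAmplitude b p) {f : S → T}
    (hf : Continuous f) : IsAmplitude (fun s => b (f s)) fun s => p (f s) where
  weight_nonneg s := hp.weight_nonneg (f s)
  continuous := hp.continuous.comp (hf.prodMap continuous_id)
  contDiff s := hp.contDiff (f s)
  exists_norm_iteratedFDeriv_le k :=
    (hp.exists_norm_iteratedFDeriv_le k).imp fun _ hC s y => hC (f s) y

lemma comp_clm {F : Type*} [NormedAddCommGroup F] [NormedSpace ℝ F] (hp : IsAmplitude b p)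
    {L : T → F →L[ℝ] E} (hL : Continuous fun z : T × F => L z.1 z.2) {R : ℝ}
    (hR : ∀ t, ‖L t‖ ≤ R) : IsAmplitude b fun t y => p t (L t y) where
  weight_nonneg := hp.weight_nonneg
  continuous := hp.continuous.comp (continuous_fst.prodMk hL)
  contDiff t := (hp.contDiff t).comp (L t).contDiff
  exists_norm_iteratedFDeriv_le k := by
    obtain ⟨C, hC⟩ := hp.exists_norm_iteratedFDeriv_le k
    refine ⟨C * R ^ k, fun t y => ?_⟩
    calc ‖iteratedFDeriv ℝ k (fun y => p t (L t y)) y‖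
        ≤ ‖iteratedFDeriv ℝ k (p t) (L t y)‖ * ‖L t‖ ^ k :=
          norm_iteratedFDeriv_comp_clm_le (hp.contDiff t) (L t) k y
      _ ≤ C * b t * R ^ k :=
          mul_le_mul (hC t _) (pow_le_pow_left₀ (norm_nonneg _) (hR t) k) (by positivity)
            ((norm_nonneg _).trans (hC t (L t y)))
      _ = C * R ^ k * b t := by ring

lemma comp_const_clm {F : Type*} [NormedAddCommGroup F] [NormedSpace ℝ F] (hp : IsAmplitude b p)
    (L : F →L[ℝ] E) : IsAmplitude b fun t y => p t (L y) :=
  hp.comp_clm (L := fun _ => L) (by fun_prop) fun _ => le_rfl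

end IsAmplitude

lemma isAmplitude_of_hasCompactSupport {φ : E → ℂ} (hφ : ContDiff ℝ ∞ φ)
    (hφc : HasCompactSupport φ) : IsAmplitude (fun _ : T => 1) fun _ => φ where
  weight_nonneg _ := zero_le_one
  continuous := hφ.continuous.comp continuous_snd
  contDiff _ := hφ
  exists_norm_iteratedFDeriv_le k := by
    obtain ⟨C, hC⟩ := (hφ.continuous_iteratedFDeriv (m := k)
      (mod_cast le_top)).bounded_above_of_compact_support (hφc.iteratedFDeriv k)
    exact ⟨C, fun _ y => by simpa using hC y⟩

end Amplitudes

section OscillatoryIntegrals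

variable {d : ℕ} {T : Type*} [MeasureSpace T]

/-- The oscillatory integral `y ↦ ∫ e^{i⟨y, Ω t⟩} p(t, y) dt` with frequencies `Ω` and
amplitude `p`. -/
def osc (Ω : T → Sp d) (p : T → Sp d → ℂ) (y : Sp d) : ℂ :=
  ∫ t, Complex.exp (Complex.I * pairing d y (Ω t)) * p t y

lemma osc_mul {T' : Type*} [MeasureSpace T'] [SFinite (volume : Measure T)]
    [SFinite (volume : Measure T')] (Ω : T → Sp d) (Ω' : T' → Sp d) (p : T → Sp d → ℂ)
    (q : T' → Sp d → ℂ) (y : Sp d) :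
    osc Ω p y * osc Ω' q y =
      osc (fun t : T × T' => Ω t.1 + Ω' t.2) (fun t y => p t.1 y * q t.2 y) y := by
  rw [osc, osc, ← integral_prod_mul]
  refine integral_congr_ae (.of_forall fun t => ?_)
  simp only [pairing_add_right, Complex.ofReal_add, mul_add, Complex.exp_add]
  ring

lemma mul_osc (φ : Sp d → ℂ) (Ω : T → Sp d) (p : T → Sp d → ℂ) (y : Sp d) :
    φ y * osc Ω p y = osc Ω (fun t y => φ y * p t y) y := by
  simp only [osc, ← integral_const_mul]
  exact integral_congr_ae (.of_forall fun t => by ring)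

lemma IsAmplitude.continuous_oscIntegrand {T : Type*} [TopologicalSpace T] {b : T → ℝ}
    {Ω : T → Sp d} {p : T → Sp d → ℂ} (hp : IsAmplitude b p) (hΩ : Continuous Ω) :
    Continuous fun z : T × Sp d =>
      Complex.exp (Complex.I * pairing d z.2 (Ω z.1)) * p z.1 z.2 := by
  have hphase : Continuous fun z : T × Sp d => pairing d z.2 (Ω z.1) :=
    continuous_pairing.comp (continuous_snd.prodMk (hΩ.comp continuous_fst))
  exact (by fun_prop : Continuous _).mul hp.continuous

variable [TopologicalSpace T] [OpensMeasurableSpace T]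
  {b : T → ℝ} {Ω : T → Sp d} {p : T → Sp d → ℂ}

lemma IsAmplitude.integrable_oscIntegrand (hp : IsAmplitude b p) (hb : Integrable b)
    (hΩ : Continuous Ω) (y : Sp d) :
    Integrable fun t => Complex.exp (Complex.I * pairing d y (Ω t)) * p t y := by
  obtain ⟨C, -, hC⟩ := hp.exists_norm_le
  refine (hb.const_mul C).mono' ((hp.continuous_oscIntegrand hΩ).comp
    (Continuous.prodMk_left y)).aestronglyMeasurable (.of_forall fun t => ?_)
  simpa [Complex.norm_exp_I_mul_ofReal] using hC t y

lemma IsAmplitude.continuous_osc (hp : IsAmplitude b p) (hb : Integrable b) (hΩ : Continuous Ω) :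
    Continuous (osc Ω p) := by
  obtain ⟨C, -, hC⟩ := hp.exists_norm_le
  refine continuous_of_dominated (bound := fun t => C * b t)
    (fun y => (hp.integrable_oscIntegrand hb hΩ y).aestronglyMeasurable)
    (fun y => .of_forall fun t => ?_) (hb.const_mul C) (.of_forall fun t => ?_)
  · simpa [Complex.norm_exp_I_mul_ofReal] using hC t y
  · exact (hp.continuous_oscIntegrand hΩ).comp (Continuous.prodMk_right t)

variable [SecondCountableTopology T]

theorem IsAmplitude.FT_osc [SFinite (volume : Measure T)] (hp : IsAmplitude b p)
    (hb : Integrable b) (hΩ : Continuous Ω) {K : Set (Sp d)} (hK : IsCompact K)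
    (hpK : ∀ t, tsupport (p t) ⊆ K) (ζ : Sp d) :
    FT d (osc Ω p) ζ = ∫ t, FT d (p t) (ζ - Ω t) := by
  obtain ⟨C, -, hC⟩ := hp.exists_norm_le
  let G : Sp d → T → ℂ := fun y t =>
    Complex.exp (-(Complex.I * pairing d y (ζ - Ω t))) * p t y
  have hG_cont : Continuous (Function.uncurry G) := by
    have hphase : Continuous fun z : Sp d × T => pairing d z.1 (ζ - Ω z.2) :=
      continuous_pairing.comp
        (continuous_fst.prodMk (continuous_const.sub (hΩ.comp continuous_snd)))
    exact (by fun_prop : Continuous _).mul (hp.continuous.comp continuous_swap)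
  have hG_norm : ∀ y t, ‖G y t‖ ≤ K.indicator (fun _ => C) y * b t := fun y t => by
    have hnorm : ‖G y t‖ = ‖p t y‖ := by
      simp only [G, norm_mul, ← mul_neg, ← Complex.ofReal_neg, Complex.norm_exp_I_mul_ofReal,
        one_mul]
    by_cases hy : y ∈ K
    · simpa [hnorm, hy] using hC t y
    · simp [hnorm, hy, image_eq_zero_of_notMem_tsupport fun h => hy (hpK t h)]
  have hG_int : Integrable (Function.uncurry G) (volume.prod volume) := by
    have hKC : Integrable (K.indicator fun _ => C) :=
      (integrableOn_const hK.measure_lt_top.ne).integrable_indicator hK.measurableSet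
    exact (hKC.mul_prod hb).mono' hG_cont.aestronglyMeasurable (.of_forall fun z => hG_norm z.1 z.2)
  calc FT d (osc Ω p) ζ = ∫ y, ∫ t, G y t := by
        simp only [FT, osc, ← integral_const_mul]
        refine integral_congr_ae (.of_forall fun y => integral_congr_ae (.of_forall fun t => ?_))
        simp only [G, pairing_sub_right, Complex.ofReal_sub, ← mul_assoc, ← Complex.exp_add]
        ring_nf
    _ = ∫ t, FT d (p t) (ζ - Ω t) := integral_integral_swap hG_int

theorem IsAmplitude.exists_norm_FT_osc_le [SFinite (volume : Measure T)] (hp : IsAmplitude b p)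
    (hb : Integrable b) (hΩ : Continuous Ω) {K : Set (Sp d)} (hK : IsCompact K)
    (hpK : ∀ t, tsupport (p t) ⊆ K) (N : ℕ) :
    ∃ C, 0 ≤ C ∧ ∀ ζ, ‖FT d (osc Ω p) ζ‖ ≤ C * ∫ t, b t * (1 + ‖ζ - Ω t‖) ^ (-N : ℝ) := by
  obtain ⟨C, hC₀, hC⟩ := exists_norm_FT_le hK N
  obtain ⟨M, hM₀, hM⟩ := hp.exists_forall_le N
  refine ⟨C * M, by positivity, fun ζ => ?_⟩
  have hint : Integrable fun t => b t * (1 + ‖ζ - Ω t‖) ^ (-N : ℝ) := by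
    refine hb.mul_bdd (c := 1) (Continuous.aestronglyMeasurable ?_) (.of_forall fun t => ?_)
    · exact (continuous_const.add (continuous_const.sub hΩ).norm).rpow_const
        fun t => .inl (by positivity : 0 < 1 + ‖ζ - Ω t‖).ne'
    · rw [Real.norm_of_nonneg (by positivity)]
      exact Real.rpow_le_one_of_one_le_of_nonpos (by simp) (by simp)
  rw [hp.FT_osc hb hΩ hK hpK, ← integral_const_mul]
  refine norm_integral_le_of_norm_le (hint.const_mul _) (.of_forall fun t => ?_)
  refine (hC (p t) _ (hp.contDiff t) (hpK t) (fun k hk => hM k hk t) (ζ - Ω t)).trans_eq ?_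
  ring

end OscillatoryIntegrals

section ConormalDecay

variable {d : ℕ}

/-- Decay of a function of `η = (η₁, η₂, η₃, η'')` of order `m₁` in `η₁`, of order `m₂` in `η₂`, and
faster than any power in `(η₃, η'')`: the behaviour of the Fourier transform of a compactly
supported product-type conormal distribution attached to `y₁ = y₂ = 0`. -/
def HasConormalDecay (m₁ m₂ : ℝ) (e : Sp d → ℂ) : Prop :=
  ∀ N : ℕ, ∃ C, ∀ η, ‖e η‖ ≤ C * ((1 + |η.1|) ^ m₁ * (1 + |η.2.1|) ^ m₂ *
    (1 + |η.2.2.1|) ^ (-N : ℝ) * (1 + ‖η.2.2.2‖) ^ (-N : ℝ))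

lemma rpow_one_add_norm_le_of_nonpos {s₁ s₂ : ℝ} (hs₁ : s₁ ≤ 0) (hs₂ : s₂ ≤ 0) {N R : ℕ}
    (hR : N + N - s₁ - s₂ ≤ R) (η : Sp d) :
    (1 + ‖η‖) ^ (-R : ℝ) ≤ (1 + |η.1|) ^ s₁ * (1 + |η.2.1|) ^ s₂ *
      ((1 + |η.2.2.1|) ^ (-N : ℝ) * (1 + ‖η.2.2.2‖) ^ (-N : ℝ)) := by
  have hN : (-N : ℝ) ≤ 0 := by simp
  have hnorm (x : ℝ) (hx₀ : 0 ≤ x) (hx : x ≤ ‖η‖) {s : ℝ} (hs : s ≤ 0) :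
      (1 + ‖η‖) ^ s ≤ (1 + x) ^ s :=
    Real.rpow_le_rpow_of_nonpos (by positivity) (by gcongr) hs
  have h₂ := norm_snd_le η
  have h₃ := (norm_snd_le η.2).trans h₂
  calc (1 + ‖η‖) ^ (-R : ℝ)
      ≤ (1 + ‖η‖) ^ (s₁ + s₂ + (-N + -N)) :=
        Real.rpow_le_rpow_of_exponent_le (by simp) (by linarith)
    _ = (1 + ‖η‖) ^ s₁ * (1 + ‖η‖) ^ s₂ * ((1 + ‖η‖) ^ (-N : ℝ) * (1 + ‖η‖) ^ (-N : ℝ)) := by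
        simp only [Real.rpow_add (by positivity : 0 < 1 + ‖η‖)]
    _ ≤ _ := by
        gcongr ?_ * ?_ * (?_ * ?_)
        · exact hnorm _ (abs_nonneg _) (norm_fst_le η) hs₁
        · exact hnorm _ (abs_nonneg _) ((norm_fst_le η.2).trans h₂) hs₂
        · exact hnorm _ (abs_nonneg _) ((norm_fst_le η.2.2).trans h₃) hN
        · exact hnorm _ (norm_nonneg _) ((norm_snd_le η.2.2).trans h₃) hN

lemma integral_comp_rpow_one_add_abs_mul_sub_le {T : Type*} [MeasureSpace T] {τ : T → ℝ}
    (hτ : MeasurePreserving τ) {m s : ℝ} (hm : m ≤ 0) (hs : s < -1) (x : ℝ) :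
    ∫ t, (1 + |τ t|) ^ m * (1 + |x - τ t|) ^ (m + s) ≤
      (∫ θ : ℝ, (1 + |θ|) ^ s) * (1 + |x|) ^ m := by
  have hint := integrable_rpow_one_add_abs_mul_sub hm hs x
  rw [← hτ.map_eq] at hint
  rw [← integral_map (f := fun θ => (1 + |θ|) ^ m * (1 + |x - θ|) ^ (m + s))
    hτ.aemeasurable hint.aestronglyMeasurable, hτ.map_eq]
  exact integral_rpow_one_add_abs_mul_sub_le hm hs x

section

variable {T₁ T₂ : Type*} [MeasureSpace T₁] [SFinite (volume : Measure T₁)] [MeasureSpace T₂]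
  [SFinite (volume : Measure T₂)] {τ₁ : T₁ → ℝ} {τ₂ : T₂ → ℝ} {m₁ m₂ : ℝ}

lemma integral_weights_mul_rpow_one_add_norm_le (hτ₁ : MeasurePreserving τ₁)
    (hτ₂ : MeasurePreserving τ₂) (hm₁ : m₁ ≤ 0) (hm₂ : m₂ ≤ 0) {N R : ℕ}
    (hR : N + N - (m₁ + -2) - (m₂ + -2) ≤ R) (η : Sp d) :
    ∫ t : T₁ × T₂, (1 + |τ₁ t.1|) ^ m₁ * (1 + |τ₂ t.2|) ^ m₂ *
        (1 + ‖η - (τ₁ t.1, τ₂ t.2, 0)‖) ^ (-R : ℝ) ≤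
      (∫ θ : ℝ, (1 + |θ|) ^ (-2 : ℝ)) ^ 2 * ((1 + |η.1|) ^ m₁ * (1 + |η.2.1|) ^ m₂ *
        (1 + |η.2.2.1|) ^ (-N : ℝ) * (1 + ‖η.2.2.2‖) ^ (-N : ℝ)) := by
  set D := (1 + |η.2.2.1|) ^ (-N : ℝ) * (1 + ‖η.2.2.2‖) ^ (-N : ℝ)
  let f : T₁ → ℝ := fun t => (1 + |τ₁ t|) ^ m₁ * (1 + |η.1 - τ₁ t|) ^ (m₁ + -2)
  let g : T₂ → ℝ := fun t => (1 + |τ₂ t|) ^ m₂ * (1 + |η.2.1 - τ₂ t|) ^ (m₂ + -2)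
  have hf : Integrable f := hτ₁.integrable_comp_of_integrable
    (integrable_rpow_one_add_abs_mul_sub hm₁ (by norm_num) η.1)
  have hg : Integrable g := hτ₂.integrable_comp_of_integrable
    (integrable_rpow_one_add_abs_mul_sub hm₂ (by norm_num) η.2.1)
  have hf_le := integral_comp_rpow_one_add_abs_mul_sub_le hτ₁ hm₁ (s := -2) (by norm_num) η.1
  have hg_le := integral_comp_rpow_one_add_abs_mul_sub_le hτ₂ hm₂ (s := -2) (by norm_num) η.2.1
  calc ∫ t : T₁ × T₂, (1 + |τ₁ t.1|) ^ m₁ * (1 + |τ₂ t.2|) ^ m₂ *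
        (1 + ‖η - (τ₁ t.1, τ₂ t.2, 0)‖) ^ (-R : ℝ)
      ≤ ∫ t : T₁ × T₂, f t.1 * g t.2 * D := by
        refine integral_mono_of_nonneg (.of_forall fun t => by positivity)
          ((hf.mul_prod hg).mul_const D) (.of_forall fun t => ?_)
        have hsplit := rpow_one_add_norm_le_of_nonpos (by linarith) (by linarith) hR
          (η - (τ₁ t.1, τ₂ t.2, 0))
        simp only [Prod.fst_sub, Prod.snd_sub, sub_zero] at hsplit
        refine (mul_le_mul_of_nonneg_left hsplit (by positivity)).trans_eq ?_
        ring
    _ = (∫ t, f t) * (∫ t, g t) * D := by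
        rw [integral_mul_const]
        exact congrArg (· * D) (integral_prod_mul f g)
    _ ≤ ((∫ θ : ℝ, (1 + |θ|) ^ (-2 : ℝ)) * (1 + |η.1|) ^ m₁) *
          ((∫ θ : ℝ, (1 + |θ|) ^ (-2 : ℝ)) * (1 + |η.2.1|) ^ m₂) * D := by
        gcongr
    _ = _ := by ring

variable [TopologicalSpace T₁] [OpensMeasurableSpace T₁] [SecondCountableTopology T₁]
  [TopologicalSpace T₂] [OpensMeasurableSpace T₂] [SecondCountableTopology T₂]

theorem hasConormalDecay_FT_mul_osc_mul_osc (hτ₁ : MeasurePreserving τ₁)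
    (hτ₁c : Continuous τ₁) (hτ₂ : MeasurePreserving τ₂) (hτ₂c : Continuous τ₂) (hm₁ : m₁ < -1)
    (hm₂ : m₂ < -1) {p : T₁ → Sp d → ℂ} {q : T₂ → Sp d → ℂ}
    (hp : IsAmplitude (fun t => (1 + |τ₁ t|) ^ m₁) p)
    (hq : IsAmplitude (fun t => (1 + |τ₂ t|) ^ m₂) q) {φ : Sp d → ℂ} (hφ : ContDiff ℝ ∞ φ)
    (hφc : HasCompactSupport φ) :
    HasConormalDecay m₁ m₂ (FT d fun y =>
      φ y * (osc (fun t => (τ₁ t, 0)) p y * osc (fun t => (0, τ₂ t, 0)) q y)) := by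
  intro N
  have hpq := (isAmplitude_of_hasCompactSupport (T := T₁ × T₂) hφ hφc).mul
    ((hp.comp_param continuous_fst).mul (hq.comp_param continuous_snd))
  have hint : Integrable fun t : T₁ × T₂ => 1 * ((1 + |τ₁ t.1|) ^ m₁ * (1 + |τ₂ t.2|) ^ m₂) := by
    simp only [one_mul]
    exact (hτ₁.integrable_comp_of_integrable (integrable_rpow_one_add_abs hm₁)).mul_prod
      (hτ₂.integrable_comp_of_integrable (integrable_rpow_one_add_abs hm₂))
  obtain ⟨R, hR⟩ := exists_nat_ge (N + N - (m₁ + -2) - (m₂ + -2))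
  obtain ⟨C, hC₀, hC⟩ := hpq.exists_norm_FT_osc_le (Ω := fun t => ((τ₁ t.1, τ₂ t.2, 0) : Sp d))
    hint (by fun_prop) hφc.isCompact (fun t => tsupport_mul_subset_left) R
  refine ⟨C * (∫ θ : ℝ, (1 + |θ|) ^ (-2 : ℝ)) ^ 2, fun η => ?_⟩
  have hosc : (fun y => φ y * (osc (fun t => (τ₁ t, 0)) p y * osc (fun t => (0, τ₂ t, 0)) q y)) =
      osc (fun t : T₁ × T₂ => (τ₁ t.1, τ₂ t.2, 0)) fun t y => φ y * (p t.1 y * q t.2 y) := by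
    ext y
    rw [osc_mul, mul_osc]
    simp only [Prod.mk_add_mk, add_zero, zero_add]
  rw [hosc]
  refine (hC η).trans ?_
  simp only [one_mul, mul_assoc C]
  exact mul_le_mul_of_nonneg_left
    (integral_weights_mul_rpow_one_add_norm_le hτ₁ hτ₂ (by linarith) (by linarith) hR η) hC₀

end

end ConormalDecay

section WeightedL2

lemma rpow_one_add_sq_add_sq_le {a b : ℝ} (ha : 0 ≤ a) (hb : 0 ≤ b) (k : ℝ) :
    (1 + a ^ 2 + b ^ 2) ^ (k / 2) ≤ 2 ^ (|k| / 2) * (1 + a) ^ k * (1 + b) ^ |k| := by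
  have hsq : ∀ x : ℝ, 0 ≤ x → (x ^ 2) ^ (k / 2) = x ^ k := fun x hx => by
    rw [← Real.rpow_natCast, ← Real.rpow_mul hx]
    norm_num [mul_div_cancel₀]
  rcases le_total 0 k with hk | hk
  · rw [abs_of_nonneg hk]
    calc (1 + a ^ 2 + b ^ 2) ^ (k / 2) ≤ (((1 + a) * (1 + b)) ^ 2) ^ (k / 2) := by
          gcongr
          rw [← sub_nonneg]
          ring_nf
          positivity
      _ = 1 * (1 + a) ^ k * (1 + b) ^ k := by
          rw [hsq _ (by positivity), Real.mul_rpow (by positivity) (by positivity), one_mul]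
      _ ≤ _ := by
          gcongr
          exact Real.one_le_rpow one_le_two (by positivity)
  · calc (1 + a ^ 2 + b ^ 2) ^ (k / 2) ≤ (2⁻¹ * (1 + a) ^ 2) ^ (k / 2) :=
          Real.rpow_le_rpow_of_nonpos (by positivity) (by nlinarith [sq_nonneg (1 - a)])
            (by linarith)
      _ = 2 ^ (|k| / 2) * (1 + a) ^ k * 1 := by
          rw [Real.mul_rpow (by positivity) (by positivity), hsq _ (by positivity),
            Real.inv_rpow zero_le_two, ← Real.rpow_neg zero_le_two, abs_of_nonpos hk, neg_div,
            mul_one]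
      _ ≤ _ := by
          gcongr
          exact Real.one_le_rpow (by simpa) (by positivity)

lemma rpow_one_add_sum_sq_le {a b c : ℝ} (ha : 0 ≤ a) (hb : 0 ≤ b) (hc : 0 ≤ c) {s : ℝ}
    (hs : s ≤ 0) : (1 + a ^ 2 + b ^ 2 + c) ^ s ≤ 2 ^ (-s) * (1 + a) ^ s * (1 + b) ^ s := by
  have hprod : 2⁻¹ * ((1 + a) * (1 + b)) ≤ 1 + a ^ 2 + b ^ 2 + c := by
    nlinarith [sq_nonneg (a - b), sq_nonneg (a - 1), sq_nonneg (b - 1)]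
  calc (1 + a ^ 2 + b ^ 2 + c) ^ s ≤ (2⁻¹ * ((1 + a) * (1 + b))) ^ s :=
        Real.rpow_le_rpow_of_nonpos (by positivity) hprod hs
    _ = 2 ^ (-s) * (1 + a) ^ s * (1 + b) ^ s := by
        rw [Real.mul_rpow (by positivity) (by positivity), Real.mul_rpow (by positivity)
          (by positivity), Real.inv_rpow zero_le_two, ← Real.rpow_neg zero_le_two, mul_assoc]

lemma memLp_two_rpow_one_add_norm {E : Type*} [NormedAddCommGroup E] [NormedSpace ℝ E]
    [FiniteDimensional ℝ E] [MeasurableSpace E] [BorelSpace E] (μ : Measure E)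
    [μ.IsAddHaarMeasure] {s : ℝ} (hs : 2 * s < -Module.finrank ℝ E) :
    MemLp (fun x : E => (1 + ‖x‖) ^ s) 2 μ := by
  have hcont : Continuous fun x : E => (1 + ‖x‖) ^ s :=
    (by fun_prop : Continuous fun x : E => 1 + ‖x‖).rpow_const fun x => .inl (by positivity)
  rw [memLp_two_iff_integrable_sq hcont.aestronglyMeasurable]
  have hsq : ∀ x : E, ((1 + ‖x‖) ^ s) ^ 2 = (1 + ‖x‖) ^ (-(-(2 * s))) := fun x => by
    rw [← Real.rpow_natCast, ← Real.rpow_mul (by positivity)]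
    ring_nf
  simpa only [hsq] using integrable_one_add_norm (μ := μ) (by linarith)

lemma memLp_two_mul_prod {X Y : Type*} [MeasurableSpace X] [MeasurableSpace Y] {μ : Measure X}
    {ν : Measure Y} [SFinite μ] [SFinite ν] {f : X → ℝ} {g : Y → ℝ} (hf : MemLp f 2 μ)
    (hg : MemLp g 2 ν) : MemLp (fun z : X × Y => f z.1 * g z.2) 2 (μ.prod ν) := by
  refine (memLp_two_iff_integrable_sq
    (hf.aestronglyMeasurable.comp_fst.mul hg.aestronglyMeasurable.comp_snd)).mpr ?_
  simpa only [Pi.mul_apply, mul_pow] using hf.integrable_sq.mul_prod hg.integrable_sq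

variable {d : ℕ} {k₁ k₂ k₃ δ : ℝ}

lemma W_le (hδ : 0 ≤ δ) (η : Sp d) :
    W d k₁ k₂ k₃ δ η ≤ 2 ^ ((|k₁| + |k₂| + |k₃| + δ) / 2) * ((1 + |η.1|) ^ (k₁ - δ / 2) *
      ((1 + |η.2.1|) ^ (k₂ - δ / 2) * ((1 + |η.2.2.1|) ^ k₃ *
        (1 + ‖η.2.2.2‖) ^ (|k₁| + |k₂| + |k₃|)))) := by
  have hk (x : ℝ) (k : ℝ) := rpow_one_add_sq_add_sq_le (abs_nonneg x) (norm_nonneg η.2.2.2) k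
  have hδη := rpow_one_add_sum_sq_le (abs_nonneg η.1) (abs_nonneg η.2.1)
    (by positivity : 0 ≤ η.2.2.1 ^ 2 + ‖η.2.2.2‖ ^ 2) (by linarith : -δ / 2 ≤ 0)
  simp only [sq_abs, ← add_assoc] at hk hδη
  calc W d k₁ k₂ k₃ δ η
      ≤ (2 ^ (|k₁| / 2) * (1 + |η.1|) ^ k₁ * (1 + ‖η.2.2.2‖) ^ |k₁|) *
          (2 ^ (|k₂| / 2) * (1 + |η.2.1|) ^ k₂ * (1 + ‖η.2.2.2‖) ^ |k₂|) *
          (2 ^ (|k₃| / 2) * (1 + |η.2.2.1|) ^ k₃ * (1 + ‖η.2.2.2‖) ^ |k₃|) *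
          (2 ^ (-(-δ / 2)) * (1 + |η.1|) ^ (-δ / 2) * (1 + |η.2.1|) ^ (-δ / 2)) := by
        unfold W
        gcongr
        exacts [hk _ _, hk _ _, hk _ _]
    _ = _ := by
        simp only [add_div, sub_eq_add_neg, neg_div, neg_neg,
          Real.rpow_add (by positivity : 0 < 1 + |η.1|),
          Real.rpow_add (by positivity : 0 < 1 + |η.2.1|),
          Real.rpow_add (by positivity : 0 < 1 + ‖η.2.2.2‖), Real.rpow_add two_pos]
        ring

theorem HasConormalDecay.memLp_W_smul {m₁ m₂ : ℝ} {e : Sp d → ℂ} (he : HasConormalDecay m₁ m₂ e)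
    (he_meas : Measurable e) (hk₁ : k₁ + m₁ ≤ -1 / 2) (hk₂ : k₂ + m₂ ≤ -1 / 2) (hδ : 0 < δ) :
    MemLp (fun η => W d k₁ k₂ k₃ δ η • e η) 2 volume := by
  obtain ⟨N, hN⟩ := exists_nat_ge (|k₁| + |k₂| + |k₃| + d + 1)
  obtain ⟨C, hC⟩ := he N
  let f : Sp d → ℝ := fun η => (1 + ‖η.1‖) ^ (k₁ + m₁ - δ / 2) *
    ((1 + ‖η.2.1‖) ^ (k₂ + m₂ - δ / 2) * ((1 + ‖η.2.2.1‖) ^ (k₃ - N) *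
      (1 + ‖η.2.2.2‖) ^ (|k₁| + |k₂| + |k₃| - N)))
  have hf : MemLp f 2 volume := by
    refine memLp_two_mul_prod (memLp_two_rpow_one_add_norm _ ?_) <|
      memLp_two_mul_prod (memLp_two_rpow_one_add_norm _ ?_) <|
      memLp_two_mul_prod (memLp_two_rpow_one_add_norm _ ?_) (memLp_two_rpow_one_add_norm _ ?_)
    · simp; linarith
    · simp; linarith
    · simp; linarith [le_abs_self k₃, abs_nonneg k₁, abs_nonneg k₂, d.cast_nonneg (α := ℝ)]
    · simp; linarith [d.cast_nonneg (α := ℝ)]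
  refine hf.of_le_mul (c := 2 ^ ((|k₁| + |k₂| + |k₃| + δ) / 2) * C)
    (Measurable.aestronglyMeasurable ?_) (.of_forall fun η => ?_)
  · unfold W
    fun_prop
  have hW₀ : 0 ≤ W d k₁ k₂ k₃ δ η := by
    unfold W
    positivity
  rw [norm_smul, Real.norm_of_nonneg hW₀, Real.norm_of_nonneg (by positivity)]
  refine (mul_le_mul (W_le hδ.le η) (hC η) (norm_nonneg _) (by positivity)).trans_eq ?_
  simp only [f, Real.norm_eq_abs, sub_eq_add_neg, Real.rpow_add (by positivity : 0 < 1 + |η.1|),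
    Real.rpow_add (by positivity : 0 < 1 + |η.2.1|),
    Real.rpow_add (by positivity : 0 < 1 + |η.2.2.1|),
    Real.rpow_add (by positivity : 0 < 1 + ‖η.2.2.2‖)]
  ring

end WeightedL2

section Symbols

variable {d : ℕ} {m : ℝ} {a : ℝ × Par d → ℂ}

/-- The dilation `(w₁, w') ↦ (s w₁, w')` of the first parameter. -/
def dilate (d : ℕ) (s : ℝ) : Par d →L[ℝ] Par d :=
  (s • ContinuousLinearMap.fst ℝ _ _).prod (.snd ℝ _ _)

lemma dilate_apply (s : ℝ) (w : Par d) : dilate d s w = (s * w.1, w.2) := rfl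

lemma norm_dilate_le {s : ℝ} (hs : |s| ≤ 1) : ‖dilate d s‖ ≤ 1 := by
  refine ContinuousLinearMap.opNorm_le_bound _ zero_le_one fun w => ?_
  rw [dilate_apply, one_mul, Prod.norm_def, Prod.norm_def, norm_mul]
  exact max_le_max_right _ (mul_le_of_le_one_left (norm_nonneg _) hs)

/-- The derivative of the symbol `a` in the first parameter, at the parameter dilated by `s`; by
Hadamard's lemma its mean over `s ∈ [0, 1]` is `(a(θ, w) - a(θ, (0, w'))) / w₁`. -/
def hadamardAmplitude (a : ℝ × Par d → ℂ) (t : unitInterval × ℝ) (w : Par d) : ℂ :=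
  fderiv ℝ (fun w' => a (t.2, w')) (dilate d t.1 w) (1, 0)

lemma fderiv_comp_prodMk (ha : ContDiff ℝ ∞ a) (θ : ℝ) (w v : Par d) :
    fderiv ℝ (fun w' => a (θ, w')) w v = fderiv ℝ a (θ, w) (0, v) := by
  have h := ((ha.differentiable (by simp)) (θ, w)).hasFDerivAt.comp w (hasFDerivAt_prodMk_right θ w)
  exact congrArg (fun A => A v) h.fderiv

lemma hasDerivAt_comp_prodMk (ha : ContDiff ℝ ∞ a) (θ : ℝ) (w : Par d) :
    HasDerivAt (fun θ => a (θ, w)) (fderiv ℝ a (θ, w) (1, 0)) θ := by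
  exact ((ha.differentiable (by simp)) (θ, w)).hasFDerivAt.comp_hasDerivAt θ
    ((hasDerivAt_id θ).prodMk (hasDerivAt_const θ w))

namespace IsSymbolP

lemma isAmplitude (ha : IsSymbolP d m a) :
    IsAmplitude (fun θ => (1 + |θ|) ^ m) fun θ w => a (θ, w) where
  weight_nonneg θ := by positivity
  continuous := ha.1.continuous
  contDiff θ := ha.1.comp (contDiff_prodMk_right θ)
  exists_norm_iteratedFDeriv_le k := by simpa using ha.2 k 0

lemma isAmplitude_deriv (ha : IsSymbolP d m a) :
    IsAmplitude (fun θ => (1 + |θ|) ^ (m - 1)) fun θ w => deriv (fun θ' => a (θ', w)) θ where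
  weight_nonneg θ := by positivity
  continuous := by
    simp only [(hasDerivAt_comp_prodMk ha.1 _ _).deriv]
    exact (ha.1.continuous_fderiv (by simp)).clm_apply continuous_const
  contDiff θ := by
    simp only [(hasDerivAt_comp_prodMk ha.1 _ _).deriv]
    exact ((ha.1.fderiv_right (by simp)).comp (contDiff_prodMk_right θ)).clm_apply contDiff_const
  exists_norm_iteratedFDeriv_le k := by simpa using ha.2 k 1

lemma isAmplitude_fderiv_fst (ha : IsSymbolP d m a) :
    IsAmplitude (fun θ => (1 + |θ|) ^ m)
      fun θ w => fderiv ℝ (fun w' => a (θ, w')) w ((1, 0) : Par d) where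
  weight_nonneg θ := by positivity
  continuous := by
    simp only [fderiv_comp_prodMk ha.1]
    exact (ha.1.continuous_fderiv (by simp)).clm_apply continuous_const
  contDiff θ :=
    ((ha.isAmplitude.contDiff θ).fderiv_right (by simp)).clm_apply contDiff_const
  exists_norm_iteratedFDeriv_le k := by
    obtain ⟨C, hC⟩ := ha.isAmplitude.exists_norm_iteratedFDeriv_le (k + 1)
    refine ⟨C, fun θ w => ?_⟩
    have hsmooth : ContDiff ℝ ∞ (fderiv ℝ fun w' => a (θ, w')) :=
      (ha.isAmplitude.contDiff θ).fderiv_right (by simp)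
    calc _ ≤ ‖((1, 0) : Par d)‖ * ‖iteratedFDeriv ℝ k (fderiv ℝ fun w' => a (θ, w')) w‖ :=
          norm_iteratedFDeriv_clm_apply_const hsmooth.contDiffAt (mod_cast le_top)
      _ = ‖iteratedFDeriv ℝ (k + 1) (fun w' => a (θ, w')) w‖ := by
          simp [norm_iteratedFDeriv_fderiv, Prod.norm_def]
      _ ≤ C * (1 + |θ|) ^ m := hC θ w

lemma isAmplitude_hadamardAmplitude (ha : IsSymbolP d m a) :
    IsAmplitude (fun t : unitInterval × ℝ => (1 + |t.2|) ^ m) (hadamardAmplitude a) :=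
  (ha.isAmplitude_fderiv_fst.comp_param continuous_snd).comp_clm
    (L := fun t : unitInterval × ℝ => dilate d t.1) (by simp only [dilate_apply]; fun_prop)
    fun t => norm_dilate_le (abs_le.mpr ⟨by linarith [t.1.2.1], t.1.2.2⟩)

lemma sub_dilate_zero_eq_mul_integral (ha : IsSymbolP d m a) (θ : ℝ) (w : Par d) :
    a (θ, w) - a (θ, dilate d 0 w) =
      w.1 * ∫ s : unitInterval, hadamardAmplitude a (s, θ) w := by
  let f' : ℝ → ℂ := fun z => fderiv ℝ (fun w' => a (θ, w')) (z, w.2) (1, 0)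
  have hderiv (z : ℝ) : HasDerivAt (fun z => a (θ, (z, w.2))) (f' z) z := by
    have h := ((ha.isAmplitude.contDiff θ).differentiable (by simp) (z, w.2)).hasFDerivAt
    exact h.comp_hasDerivAt z ((hasDerivAt_id z).prodMk (hasDerivAt_const z w.2))
  have hcont : Continuous f' :=
    ha.isAmplitude_fderiv_fst.continuous.comp (by fun_prop : Continuous fun z => (θ, (z, w.2)))
  have hftc := intervalIntegral.integral_unitInterval_deriv_eq_sub (z₀ := 0) (z₁ := w.1)
    (hcont.comp (by fun_prop)).continuousOn fun s _ => hderiv _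
  simp only [zero_add, smul_eq_mul, Complex.real_smul] at hftc
  rw [dilate_apply, zero_mul, ← hftc, intervalIntegral.integral_of_le zero_le_one,
    ← integral_Icc_eq_integral_Ioc]
  congr 1
  exact (integral_subtype measurableSet_Icc fun s => f' (s * w.1)).symm

end IsSymbolP

lemma integrable_rpow_one_add_abs_snd (hm : m < -1) :
    Integrable fun t : unitInterval × ℝ => (1 + |t.2|) ^ m :=
  measurePreserving_snd.integrable_comp_of_integrable (integrable_rpow_one_add_abs hm)

namespace IsSymbolP

variable {Ω : ℝ → Sp d}

lemma osc_sub_osc_dilate_zero (ha : IsSymbolP d m a) (hm : m < -1) (hΩ : Continuous Ω)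
    (L : Sp d →L[ℝ] Par d) (y : Sp d) :
    osc Ω (fun θ y => a (θ, L y)) y - osc Ω (fun θ y => a (θ, dilate d 0 (L y))) y =
      (L y).1 * osc (fun t : unitInterval × ℝ => Ω t.2)
        (fun t y => hadamardAmplitude a t (L y)) y := by
  have hint (A : Sp d →L[ℝ] Par d) :=
    (ha.isAmplitude.comp_const_clm A).integrable_oscIntegrand (integrable_rpow_one_add_abs hm) hΩ y
  have hint' := (ha.isAmplitude_hadamardAmplitude.comp_const_clm L).integrable_oscIntegrand
    (integrable_rpow_one_add_abs_snd hm) (hΩ.comp continuous_snd) y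
  calc _ = ∫ θ, Complex.exp (Complex.I * pairing d y (Ω θ)) *
        (a (θ, L y) - a (θ, dilate d 0 (L y))) := by
        simp only [mul_sub]
        exact (integral_sub (hint L) (hint (dilate d 0 ∘L L))).symm
    _ = ∫ θ, (L y).1 * ∫ s : unitInterval,
          Complex.exp (Complex.I * pairing d y (Ω θ)) * hadamardAmplitude a (s, θ) (L y) := by
        simp only [ha.sub_dilate_zero_eq_mul_integral, integral_const_mul, mul_left_comm]
    _ = _ := by
        rw [integral_const_mul]
        exact congrArg _ (integral_prod_symm _ hint').symm

lemma mul_osc_eq_I_mul_osc_deriv (ha : IsSymbolP d m a) (hm : m < -1) (hΩ : Continuous Ω)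
    (L : Sp d →L[ℝ] Par d) {x : ℝ} {y : Sp d} (hx : ∀ θ, pairing d y (Ω θ) = x * θ) :
    x * osc Ω (fun θ y => a (θ, L y)) y =
      Complex.I * osc Ω (fun θ y => deriv (fun θ' => a (θ', L y)) θ) y := by
  have hphase (θ : ℝ) : HasDerivAt (fun θ => Complex.exp (Complex.I * pairing d y (Ω θ)))
      (Complex.exp (Complex.I * pairing d y (Ω θ)) * (Complex.I * x)) θ := by
    simp only [hx]
    simpa using (((hasDerivAt_id θ).const_mul x).ofReal_comp.const_mul Complex.I).cexp
  have hsymbol (θ : ℝ) : HasDerivAt (fun θ => a (θ, L y)) (deriv (fun θ => a (θ, L y)) θ) θ :=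
    (hasDerivAt_comp_prodMk ha.1 θ (L y)).differentiableAt.hasDerivAt
  have hint := (ha.isAmplitude.comp_const_clm L).integrable_oscIntegrand
    (integrable_rpow_one_add_abs hm) hΩ y
  have hint' := (ha.isAmplitude_deriv.comp_const_clm L).integrable_oscIntegrand
    (integrable_rpow_one_add_abs (by linarith)) hΩ y
  have hparts := integral_mul_deriv_eq_deriv_mul_of_integrable (fun θ _ => hphase θ)
    (fun θ _ => hsymbol θ) hint'
    ((hint.const_mul (Complex.I * x)).congr (.of_forall fun θ => by simp only [Pi.mul_apply]; ring))
    hint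
  simp only [mul_right_comm _ (Complex.I * (x : ℂ)), integral_mul_const] at hparts
  simp only [osc]
  rw [hparts]
  linear_combination (x * ∫ θ, Complex.exp (Complex.I * pairing d y (Ω θ)) * a (θ, L y)) *
    Complex.I_mul_I

end IsSymbolP

end Symbols

section Products

variable {d : ℕ} {m₁ m₂ : ℝ} {a₁ a₂ : ℝ × Par d → ℂ} {φ : Sp d → ℂ}

/-- The projection `y ↦ (y₂, y₃, y'')` onto the parameters of the wave `v₁`. -/
def dropFst (d : ℕ) : Sp d →L[ℝ] Par d := .snd ℝ _ _

/-- The projection `y ↦ (y₁, y₃, y'')` onto the parameters of the wave `v₂`. -/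
def dropSnd (d : ℕ) : Sp d →L[ℝ] Par d :=
  (ContinuousLinearMap.fst ℝ _ _).prod (.snd ℝ _ _ ∘L .snd ℝ _ _)

lemma v1_eq_osc (a : ℝ × Par d → ℂ) :
    v1 d a = osc (fun θ : ℝ => (θ, 0)) fun θ y => a (θ, dropFst d y) := by
  ext y
  simp [v1, osc, pairing, dropFst]

lemma v2_eq_osc (a : ℝ × Par d → ℂ) :
    v2 d a = osc (fun θ : ℝ => (0, θ, 0)) fun θ y => a (θ, dropSnd d y) := by
  ext y
  simp [v2, osc, pairing, dropSnd]

lemma w12_eq_osc_mul_osc (a₁ a₂ : ℝ × Par d → ℂ) (y : Sp d) :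
    w12 d a₁ a₂ y =
      osc (fun θ : ℝ => (θ, 0)) (fun θ y => a₁ (θ, dilate d 0 (dropFst d y))) y *
        osc (fun θ : ℝ => (0, θ, 0)) (fun θ y => a₂ (θ, dilate d 0 (dropSnd d y))) y := by
  rw [osc_mul]
  simp [w12, osc, pairing, dilate_apply, dropFst, dropSnd, mul_assoc]

/-- The part of `v₁ v₂ - w₁₂` in which the symbol of the first wave has been differentiated in its
frequency. -/
def errorOne (a₁ a₂ : ℝ × Par d → ℂ) (y : Sp d) : ℂ :=
  Complex.I *
    (osc (fun θ : ℝ => (θ, 0))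
        (fun θ y => deriv (fun θ' => a₁ (θ', dilate d 0 (dropFst d y))) θ) y *
      osc (fun t : unitInterval × ℝ => (0, t.2, 0))
        (fun t y => hadamardAmplitude a₂ t (dropSnd d y)) y)

/-- The part of `v₁ v₂ - w₁₂` in which the symbol of the second wave has been differentiated in its
frequency. -/
def errorTwo (a₁ a₂ : ℝ × Par d → ℂ) (y : Sp d) : ℂ :=
  Complex.I *
    (osc (fun t : unitInterval × ℝ => (t.2, 0))
        (fun t y => hadamardAmplitude a₁ t (dropFst d y)) y *
      osc (fun θ : ℝ => (0, θ, 0)) (fun θ y => deriv (fun θ' => a₂ (θ', dropSnd d y)) θ) y)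

theorem v1_mul_v2_sub_w12_eq (ha₁ : IsSymbolP d m₁ a₁) (ha₂ : IsSymbolP d m₂ a₂) (hm₁ : m₁ < -1)
    (hm₂ : m₂ < -1) (y : Sp d) :
    v1 d a₁ y * v2 d a₂ y - w12 d a₁ a₂ y = errorOne a₁ a₂ y + errorTwo a₁ a₂ y := by
  have hΩ₁ : Continuous fun θ : ℝ => ((θ, 0) : Sp d) := by fun_prop
  have hΩ₂ : Continuous fun θ : ℝ => ((0, θ, 0) : Sp d) := by fun_prop
  have hsub₁ := ha₁.osc_sub_osc_dilate_zero hm₁ hΩ₁ (dropFst d) y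
  have hsub₂ := ha₂.osc_sub_osc_dilate_zero hm₂ hΩ₂ (dropSnd d) y
  have hparts₁ := ha₁.mul_osc_eq_I_mul_osc_deriv hm₁ hΩ₁ (dilate d 0 ∘L dropFst d) (x := y.1)
    (y := y) fun θ => by simp [pairing]
  have hparts₂ := ha₂.mul_osc_eq_I_mul_osc_deriv hm₂ hΩ₂ (dropSnd d) (x := y.2.1)
    (y := y) fun θ => by simp [pairing]
  have hfst : (dropFst d y).1 = y.2.1 := rfl
  have hsnd : (dropSnd d y).1 = y.1 := rfl
  simp only [hfst, hsnd, ContinuousLinearMap.comp_apply] at hsub₁ hsub₂ hparts₁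
  rw [v1_eq_osc, v2_eq_osc, w12_eq_osc_mul_osc, errorOne, errorTwo]
  linear_combination
    osc (fun θ : ℝ => (0, θ, 0)) (fun θ y => a₂ (θ, dropSnd d y)) y * hsub₁ +
    osc (fun θ : ℝ => (θ, 0)) (fun θ y => a₁ (θ, dilate d 0 (dropFst d y))) y * hsub₂ +
    osc (fun t : unitInterval × ℝ => (0, t.2, 0))
      (fun t y => hadamardAmplitude a₂ t (dropSnd d y)) y * hparts₁ +
    osc (fun t : unitInterval × ℝ => (t.2, 0))
      (fun t y => hadamardAmplitude a₁ t (dropFst d y)) y * hparts₂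

lemma continuous_errorOne (ha₁ : IsSymbolP d m₁ a₁) (ha₂ : IsSymbolP d m₂ a₂) (hm₁ : m₁ < -1)
    (hm₂ : m₂ < -1) : Continuous (errorOne a₁ a₂) :=
  continuous_const.mul <|
    ((ha₁.isAmplitude_deriv.comp_const_clm (dilate d 0 ∘L dropFst d)).continuous_osc
      (integrable_rpow_one_add_abs (by linarith)) (by fun_prop)).mul
    ((ha₂.isAmplitude_hadamardAmplitude.comp_const_clm (dropSnd d)).continuous_osc
      (integrable_rpow_one_add_abs_snd hm₂) (by fun_prop))

lemma continuous_errorTwo (ha₁ : IsSymbolP d m₁ a₁) (ha₂ : IsSymbolP d m₂ a₂) (hm₁ : m₁ < -1)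
    (hm₂ : m₂ < -1) : Continuous (errorTwo a₁ a₂) :=
  continuous_const.mul <|
    ((ha₁.isAmplitude_hadamardAmplitude.comp_const_clm (dropFst d)).continuous_osc
      (integrable_rpow_one_add_abs_snd hm₁) (by fun_prop)).mul
    ((ha₂.isAmplitude_deriv.comp_const_clm (dropSnd d)).continuous_osc
      (integrable_rpow_one_add_abs (by linarith)) (by fun_prop))

theorem hasConormalDecay_FT_mul_errorOne (ha₁ : IsSymbolP d m₁ a₁) (ha₂ : IsSymbolP d m₂ a₂)
    (hm₁ : m₁ < -1) (hm₂ : m₂ < -1) (hφ : ContDiff ℝ ∞ φ) (hφc : HasCompactSupport φ) :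
    HasConormalDecay (m₁ - 1) m₂ (FT d (φ * errorOne a₁ a₂)) := by
  have h := hasConormalDecay_FT_mul_osc_mul_osc (.id _) continuous_id measurePreserving_snd
    continuous_snd (by linarith : m₁ - 1 < -1) hm₂
    (ha₁.isAmplitude_deriv.comp_const_clm (dilate d 0 ∘L dropFst d))
    (ha₂.isAmplitude_hadamardAmplitude.comp_const_clm (dropSnd d))
    (hφ.mul (contDiff_const (c := Complex.I))) hφc.mul_right
  simp only [mul_assoc] at h
  exact h

theorem hasConormalDecay_FT_mul_errorTwo (ha₁ : IsSymbolP d m₁ a₁) (ha₂ : IsSymbolP d m₂ a₂)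
    (hm₁ : m₁ < -1) (hm₂ : m₂ < -1) (hφ : ContDiff ℝ ∞ φ) (hφc : HasCompactSupport φ) :
    HasConormalDecay m₁ (m₂ - 1) (FT d (φ * errorTwo a₁ a₂)) := by
  have h := hasConormalDecay_FT_mul_osc_mul_osc measurePreserving_snd continuous_snd (.id _)
    continuous_id hm₁ (by linarith : m₂ - 1 < -1)
    (ha₁.isAmplitude_hadamardAmplitude.comp_const_clm (dropFst d))
    (ha₂.isAmplitude_deriv.comp_const_clm (dropSnd d))
    (hφ.mul (contDiff_const (c := Complex.I))) hφc.mul_right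
  simp only [mul_assoc] at h
  exact h

end Products

theorem stmt_8_general (d : ℕ) {m₁ m₂ : ℝ} (hm₁ : m₁ < -1) (hm₂ : m₂ < -1)
    {a₁ a₂ : ℝ × Par d → ℂ} (ha₁ : IsSymbolP d m₁ a₁) (ha₂ : IsSymbolP d m₂ a₂)
    {φ : Sp d → ℂ} (hφ : ContDiff ℝ ∞ φ) (hφc : HasCompactSupport φ) (k₃ : ℝ) {δ : ℝ}
    (hδ : 0 < δ) :
    ∃ e₁ e₂ : Sp d → ℂ,
      Measurable e₁ ∧ Measurable e₂ ∧
      (∀ η : Sp d,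
        FT d (fun y => φ y * (v1 d a₁ y * v2 d a₂ y - w12 d a₁ a₂ y)) η = e₁ η + e₂ η) ∧
      MemLp (fun η => W d (-m₁ + 1/2) (-m₂ - 1/2) k₃ δ η • e₁ η) 2 volume ∧
      MemLp (fun η => W d (-m₁ - 1/2) (-m₂ + 1/2) k₃ δ η • e₂ η) 2 volume := by
  have hint₁ : Integrable (φ * errorOne a₁ a₂) :=
    (hφ.continuous.mul (continuous_errorOne ha₁ ha₂ hm₁ hm₂)).integrable_of_hasCompactSupport
      hφc.mul_right
  have hint₂ : Integrable (φ * errorTwo a₁ a₂) :=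
    (hφ.continuous.mul (continuous_errorTwo ha₁ ha₂ hm₁ hm₂)).integrable_of_hasCompactSupport
      hφc.mul_right
  refine ⟨FT d (φ * errorOne a₁ a₂), FT d (φ * errorTwo a₁ a₂), (continuous_FT hint₁).measurable,
    (continuous_FT hint₂).measurable, fun η => ?_, ?_, ?_⟩
  · simp only [v1_mul_v2_sub_w12_eq ha₁ ha₂ hm₁ hm₂, mul_add]
    exact congrFun (FT_add hint₁ hint₂) η
  · exact (hasConormalDecay_FT_mul_errorOne ha₁ ha₂ hm₁ hm₂ hφ hφc).memLp_W_smul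
      (continuous_FT hint₁).measurable (by linarith) (by linarith) hδ
  · exact (hasConormalDecay_FT_mul_errorTwo ha₁ ha₂ hm₁ hm₂ hφ hφc).memLp_W_smul
      (continuous_FT hint₂).measurable (by linarith) (by linarith) hδ

/-- **Pairwise-product statement (5.25)–(5.26) of Proposition 5.21:** the product
of two transversal conormal waves equals a product-type conormal distribution
attached to their codimension-two intersection, modulo smoother errors
(expressed on the Fourier transform side). -/
theorem stmt_8 (d : ℕ) (m : ℝ) (hm : m < -1)
    (a₁ a₂ : ℝ × Par d → ℂ)
    (ha₁ : IsSymbolP d m a₁) (ha₂ : IsSymbolP d m a₂)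
    (φ : Sp d → ℂ) (hφ : ContDiff ℝ (⊤ : ℕ∞) φ) (hφc : HasCompactSupport φ)
    (k₃ : ℝ) (hk₃ : 0 ≤ k₃) (δ : ℝ) (hδ : 0 < δ) :
    ∃ e₁ e₂ : Sp d → ℂ,
      Measurable e₁ ∧ Measurable e₂ ∧
      (∀ η : Sp d,
        FT d (fun y => φ y * (v1 d a₁ y * v2 d a₂ y - w12 d a₁ a₂ y)) η = e₁ η + e₂ η) ∧
      MemLp (fun η => W d (-m + 1/2) (-m - 1/2) k₃ δ η • e₁ η) 2 volume ∧
      MemLp (fun η => W d (-m - 1/2) (-m + 1/2) k₃ δ η • e₂ η) 2 volume :=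
  stmt_8_general d hm hm ha₁ ha₂ hφ hφc k₃ hδ
end
end

section
/- Let a, b, x₀₃ ∈ ℝ with t₀ := √(a² + b² + x₀₃²) > 0, and let ξ₀ = (ξ₀₁, ξ₀₂, ξ₀₃) ∈ ℝ³ with τ₀ := √(ξ₀₁²+ξ₀₂²+ξ₀₃²) > 0 and x₀₃ τ₀ + t₀ ξ₀₃ = 0. For s ≥ 0 set t = t₀ + 2τ₀ s, x₁ = a − 2ξ₀₁ s, x₂ = b − 2ξ₀₂ s, x₃ = x₀₃ − 2ξ₀₃ s. Then t·x₀₃ = t₀·x₃, t² − x₃² ≥ 0, and (x₁ − a)² + (x₂ − b)² = (√(t² − x₃²) − √(a² + b²))². -/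
/-!
Split the base point as `(t₀, p, y₀)` and the covector as `(τ, ξ, ζ)`, with `p = (a, b)` and
`y₀ = x₀₃` in the coordinates of the paper. The conormal relation says that `(τ, -ζ)` is parallel to
`(t₀, y₀)`, so the `(t, y)` part of the ray stays on the line through the origin spanned by
`(t₀, y₀)`, and the Minkowski length `√(t² - ‖y‖²)` is homogeneous along that line. At the base
point this length is `‖p‖`; for the covector it is `‖ξ‖`, since the covector is null. The length at
parameter `s` is therefore `‖p‖ + 2 s ‖ξ‖`, while the transverse displacement has length
`2 |s| ‖ξ‖`.
-/

theorem add_smul_eq_smul_sub_of_conormal {R M : Type*} [CommRing R] [AddCommGroup M] [Module R M]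
    {t₀ τ : R} {y₀ ζ : M} (hconormal : τ • y₀ + t₀ • ζ = 0) (c : R) :
    (t₀ + c * τ) • y₀ = t₀ • (y₀ - c • ζ) := by
  linear_combination (norm := module) c • hconormal

section

variable {E F : Type*} [SeminormedAddCommGroup E] [SeminormedAddCommGroup F] [NormedSpace ℝ F]
  {t₀ τ t s : ℝ} {p ξ x : E} {y₀ ζ y : F}

theorem sq_sub_norm_sq_of_smul_eq (ht₀ : t₀ ≠ 0) (h : t • y₀ = t₀ • y) :
    t ^ 2 - ‖y‖ ^ 2 = (t / t₀) ^ 2 * (t₀ ^ 2 - ‖y₀‖ ^ 2) := by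
  have hy : y = (t / t₀) • y₀ := by
    rw [div_eq_inv_mul, mul_smul, h, inv_smul_smul₀ ht₀]
  rw [hy, norm_smul, Real.norm_eq_abs, mul_pow, sq_abs]
  field_simp

theorem sqrt_sq_sub_norm_sq_of_smul_eq (ht₀ : 0 < t₀) (ht : 0 ≤ t) (h : t • y₀ = t₀ • y) :
    √(t ^ 2 - ‖y‖ ^ 2) = t / t₀ * √(t₀ ^ 2 - ‖y₀‖ ^ 2) := by
  rw [sq_sub_norm_sq_of_smul_eq ht₀.ne' h, Real.sqrt_mul (sq_nonneg _),
    Real.sqrt_sq (div_nonneg ht ht₀.le)]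

theorem norm_eq_div_mul_norm_of_conormal (ht₀ : 0 < t₀) (hτ : 0 ≤ τ)
    (hbase : t₀ ^ 2 = ‖p‖ ^ 2 + ‖y₀‖ ^ 2) (hnull : τ ^ 2 = ‖ξ‖ ^ 2 + ‖ζ‖ ^ 2)
    (hconormal : τ • y₀ + t₀ • ζ = 0) :
    ‖ξ‖ = τ / t₀ * ‖p‖ := by
  have hparallel : τ • y₀ = t₀ • -ζ := by
    rw [smul_neg, eq_neg_of_add_eq_zero_left hconormal]
  have hscale := sqrt_sq_sub_norm_sq_of_smul_eq ht₀ hτ hparallel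
  rwa [norm_neg, hnull, hbase, add_sub_cancel_right, add_sub_cancel_right,
    Real.sqrt_sq (norm_nonneg ξ), Real.sqrt_sq (norm_nonneg p)] at hscale

theorem sqrt_sq_sub_norm_sq_eq_norm_add_of_conormal (ht₀ : 0 < t₀) (hτ : 0 ≤ τ)
    (hbase : t₀ ^ 2 = ‖p‖ ^ 2 + ‖y₀‖ ^ 2) (hnull : τ ^ 2 = ‖ξ‖ ^ 2 + ‖ζ‖ ^ 2)
    (hconormal : τ • y₀ + t₀ • ζ = 0) {c : ℝ} (hc : 0 ≤ t₀ + c * τ) :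
    √((t₀ + c * τ) ^ 2 - ‖y₀ - c • ζ‖ ^ 2) = ‖p‖ + c * ‖ξ‖ := by
  rw [sqrt_sq_sub_norm_sq_of_smul_eq ht₀ hc (add_smul_eq_smul_sub_of_conormal hconormal c),
    hbase, add_sub_cancel_right, Real.sqrt_sq (norm_nonneg p),
    norm_eq_div_mul_norm_of_conormal ht₀ hτ hbase hnull hconormal]
  field_simp

theorem stmt_12_general [NormedSpace ℝ E]
    (ht₀ : t₀ = √(‖p‖ ^ 2 + ‖y₀‖ ^ 2)) (ht₀_pos : 0 < t₀)
    (hτ : τ = √(‖ξ‖ ^ 2 + ‖ζ‖ ^ 2)) (hconormal : τ • y₀ + t₀ • ζ = 0)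
    (ht : t = t₀ + 2 * τ * s) (ht_nonneg : 0 ≤ t)
    (hx : x = p - (2 * s) • ξ) (hy : y = y₀ - (2 * s) • ζ) :
    t • y₀ = t₀ • y ∧ 0 ≤ t ^ 2 - ‖y‖ ^ 2 ∧
      ‖x - p‖ ^ 2 = (√(t ^ 2 - ‖y‖ ^ 2) - ‖p‖) ^ 2 := by
  have hbase : t₀ ^ 2 = ‖p‖ ^ 2 + ‖y₀‖ ^ 2 := by rw [ht₀, Real.sq_sqrt (by positivity)]
  have hnull : τ ^ 2 = ‖ξ‖ ^ 2 + ‖ζ‖ ^ 2 := by rw [hτ, Real.sq_sqrt (by positivity)]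
  have hτ_nonneg : 0 ≤ τ := hτ ▸ Real.sqrt_nonneg _
  obtain rfl : t = t₀ + 2 * s * τ := by rw [ht]; ring
  have hparallel : (t₀ + 2 * s * τ) • y₀ = t₀ • y :=
    hy ▸ add_smul_eq_smul_sub_of_conormal hconormal (2 * s)
  refine ⟨hparallel, ?_, ?_⟩
  · rw [sq_sub_norm_sq_of_smul_eq ht₀_pos.ne' hparallel, hbase, add_sub_cancel_right]
    positivity
  · rw [hx, hy, sqrt_sq_sub_norm_sq_eq_norm_add_of_conormal ht₀_pos hτ_nonneg hbase hnull
      hconormal ht_nonneg, sub_sub_cancel_left, norm_neg, norm_smul, add_sub_cancel_left,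
      mul_pow, mul_pow, Real.norm_eq_abs, sq_abs]

end

/-- **The third example: the flow-out Lagrangian lies over the surface
`Q_{a,b}` of equation (2.4).**  With base point `(t₀, a, b, x₀₃) ∈ Γ_{a,b}`,
covector `ξ₀` with `τ₀ = |ξ₀| > 0` and `x₀₃τ₀ + t₀ξ₀₃ = 0`, and flow parameter
`s ≥ 0`, the point `(t, x₁, x₂, x₃)` of the flow-out satisfies
`t·x₀₃ = t₀·x₃`, `t² - x₃² ≥ 0`, and
`(x₁-a)² + (x₂-b)² = (√(t²-x₃²) - √(a²+b²))²`. -/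
theorem stmt_12 (a b x₀₃ ξ₀₁ ξ₀₂ ξ₀₃ s t₀ τ₀ t x₁ x₂ x₃ : ℝ)
    (hs : 0 ≤ s)
    (ht₀ : t₀ = Real.sqrt (a ^ 2 + b ^ 2 + x₀₃ ^ 2)) (ht₀pos : 0 < t₀)
    (hτ₀ : τ₀ = Real.sqrt (ξ₀₁ ^ 2 + ξ₀₂ ^ 2 + ξ₀₃ ^ 2)) (hτ₀pos : 0 < τ₀)
    (hcon : x₀₃ * τ₀ + t₀ * ξ₀₃ = 0)
    (ht : t = t₀ + 2 * τ₀ * s)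
    (hx₁ : x₁ = a - 2 * ξ₀₁ * s) (hx₂ : x₂ = b - 2 * ξ₀₂ * s)
    (hx₃ : x₃ = x₀₃ - 2 * ξ₀₃ * s) :
    t * x₀₃ = t₀ * x₃ ∧
    0 ≤ t ^ 2 - x₃ ^ 2 ∧
    (x₁ - a) ^ 2 + (x₂ - b) ^ 2 =
      (Real.sqrt (t ^ 2 - x₃ ^ 2) - Real.sqrt (a ^ 2 + b ^ 2)) ^ 2 := by
  have hx : !₂[x₁, x₂] = !₂[a, b] - (2 * s) • !₂[ξ₀₁, ξ₀₂] := by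
    ext i; fin_cases i <;> simp [hx₁, hx₂, mul_right_comm]
  have hdist : ‖!₂[x₁, x₂] - !₂[a, b]‖ ^ 2 = (x₁ - a) ^ 2 + (x₂ - b) ^ 2 := by
    simp [EuclideanSpace.norm_sq_eq]
  have hnorm : ‖!₂[a, b]‖ = √(a ^ 2 + b ^ 2) := by simp [EuclideanSpace.norm_eq]
  simpa only [smul_eq_mul, Real.norm_eq_abs, sq_abs, hdist, hnorm] using
    stmt_12_general (p := !₂[a, b]) (ξ := !₂[ξ₀₁, ξ₀₂]) (y₀ := x₀₃) (ζ := ξ₀₃)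
      (by simpa [EuclideanSpace.norm_sq_eq] using ht₀) ht₀pos
      (by simpa [EuclideanSpace.norm_sq_eq] using hτ₀)
      (by simpa [mul_comm] using hcon) ht (by rw [ht]; positivity) hx
      (by rw [hx₃, smul_eq_mul, mul_right_comm])
end

section
/- Let n ≥ 3. Let b₁₂, b₁₃, b₂₃ : ℝⁿ → ℝ be C^∞ with b₂₃ nowhere vanishing, let b_{jk} : ℝⁿ → ℝ be C^∞ for 1 ≤ j ≤ n and 4 ≤ k ≤ n, let c₀, c₁, …, c_n : ℝⁿ → ℝ be C^∞, and define the second-order operator P u = b₁₂ ∂₁∂₂u + b₁₃ ∂₁∂₃u + b₂₃ ∂₂∂₃u + ∑_{j=1}^{n} ∑_{k=4}^{n} b_{jk} ∂_j∂_k u + ∑_{j=1}^{n} c_j ∂_j u + c₀ u for u ∈ C^∞(ℝⁿ). Then there exist C^∞ functions a₁ : ℝⁿ → ℝ and ℓ^{(r)}_i : ℝⁿ → ℝ, indexed by r ∈ {1} ∪ {4,…,n} ∪ {⋆} and 0 ≤ i ≤ n, such that for every u ∈ C^∞(ℝⁿ): ∂₁(Pu) − P(∂₁u) = a₁·(Pu)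 + (∑_{i=1}^{n} ℓ^{(1)}_i ∂_i(∂₁u) + ℓ^{(1)}_0 ∂₁u) + ∑_{k=4}^{n} (∑_{i=1}^{n} ℓ^{(k)}_i ∂_i(∂_k u) + ℓ^{(k)}_0 ∂_k u) + (∑_{i=1}^{n} ℓ^{(⋆)}_i ∂_i u + ℓ^{(⋆)}_0 u). -/
noncomputable section

/-- The partial derivative `∂_i u` of a function on `ℝⁿ = (Fin n → ℝ)`
(coordinates are 0-indexed: `∂_1` of the paper is `pd n ⟨0,_⟩`, etc.). -/
def pd (n : ℕ) (i : Fin n) (u : (Fin n → ℝ) → ℝ) : (Fin n → ℝ) → ℝ :=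
  fun y => fderiv ℝ u y (Pi.single i 1)

/-- The second-order operator in normal form (5.8):
`P u = b₁₂ ∂₁∂₂u + b₁₃ ∂₁∂₃u + b₂₃ ∂₂∂₃u + ∑_{j=1}^{n} ∑_{k=4}^{n} b_{jk} ∂_j∂_k u
      + ∑_{j=1}^{n} c_j ∂_j u + c₀ u`
(0-indexed: the three distinguished coordinates are `0,1,2`, and `k` ranges over
the indices with `3 ≤ k`). -/
def Pop (n : ℕ) (hn : 3 ≤ n)
    (b₁₂ b₁₃ b₂₃ : (Fin n → ℝ) → ℝ) (B : Fin n → Fin n → (Fin n → ℝ) → ℝ)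
    (c₀ : (Fin n → ℝ) → ℝ) (c : Fin n → (Fin n → ℝ) → ℝ)
    (u : (Fin n → ℝ) → ℝ) : (Fin n → ℝ) → ℝ :=
  fun y =>
    b₁₂ y * pd n ⟨0, by omega⟩ (pd n ⟨1, by omega⟩ u) y +
    b₁₃ y * pd n ⟨0, by omega⟩ (pd n ⟨2, by omega⟩ u) y +
    b₂₃ y * pd n ⟨1, by omega⟩ (pd n ⟨2, by omega⟩ u) y +
    (∑ j : Fin n, ∑ k : Fin n, if 3 ≤ (k : ℕ) then B j k y * pd n j (pd n k u) y else 0) +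
    (∑ j : Fin n, c j y * pd n j u y) + c₀ y * u y

/-!
Differentiating the coefficients of `P` shows that `[∂ᵢ, P]` is an operator of the same shape as
`P`, with `∂ᵢb` in place of every coefficient `b`. If `∂ᵢb₂₃ = a b₂₃`, subtracting `a P` removes
the `∂₂∂₃` term, the only second-order one containing neither `∂₁` nor some `∂ₖ` with `k ≥ 4`.
If `b₂₃` has no zeros, `a = ∂ᵢb₂₃ / b₂₃` will do.
-/

section PartialDerivative

variable {n : ℕ} {f g u : (Fin n → ℝ) → ℝ} {y : Fin n → ℝ}

lemma contDiff_pd {m : WithTop ℕ∞} (i : Fin n) (hu : ContDiff ℝ (m + 1) u) :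
    ContDiff ℝ m (pd n i u) :=
  (hu.fderiv_right le_rfl).clm_apply contDiff_const

lemma pd_fun_add (i : Fin n) (hf : DifferentiableAt ℝ f y) (hg : DifferentiableAt ℝ g y) :
    pd n i (fun x => f x + g x) y = pd n i f y + pd n i g y := by
  simp only [pd, fderiv_fun_add hf hg, add_apply]

lemma pd_fun_mul (i : Fin n) (hf : DifferentiableAt ℝ f y) (hg : DifferentiableAt ℝ g y) :
    pd n i (fun x => f x * g x) y = pd n i f y * g y + f y * pd n i g y := by
  simp only [pd, fderiv_fun_mul hf hg, add_apply, smul_apply, smul_eq_mul]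
  ring

lemma pd_fun_sum {ι : Type*} (i : Fin n) {s : Finset ι} {F : ι → (Fin n → ℝ) → ℝ}
    (hF : ∀ j ∈ s, DifferentiableAt ℝ (F j) y) :
    pd n i (fun x => ∑ j ∈ s, F j x) y = ∑ j ∈ s, pd n i (F j) y := by
  simp only [pd, fderiv_fun_sum hF, sum_apply]

lemma pd_comm (i j : Fin n) (hu : ContDiff ℝ 2 u) : pd n i (pd n j u) = pd n j (pd n i u) := by
  funext y
  have hdiff : DifferentiableAt ℝ (fderiv ℝ u) y :=
    (hu.fderiv_right (m := 1) le_rfl).differentiable one_ne_zero y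
  have hsymm : IsSymmSndFDerivAt ℝ u y :=
    hu.contDiffAt.isSymmSndFDerivAt minSmoothness_of_isRCLikeNormedField.le
  unfold pd
  rw [fderiv_clm_apply hdiff (by fun_prop), fderiv_clm_apply hdiff (by fun_prop)]
  simpa using hsymm (Pi.single i 1) (Pi.single j 1)

lemma pd_mul_pd (i j : Fin n) (hf : DifferentiableAt ℝ f y) (hu : ContDiff ℝ 2 u) :
    pd n i (fun x => f x * pd n j u x) y =
      pd n i f y * pd n j u y + f y * pd n j (pd n i u) y := by
  have hdiff := (contDiff_pd (m := 1) j hu).differentiable one_ne_zero y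
  rw [pd_fun_mul i hf hdiff, pd_comm i j hu]

lemma pd_mul_pd_pd (i j k : Fin n) (hf : DifferentiableAt ℝ f y) (hu : ContDiff ℝ 3 u) :
    pd n i (fun x => f x * pd n j (pd n k u) x) y =
      pd n i f y * pd n j (pd n k u) y + f y * pd n j (pd n k (pd n i u)) y := by
  have huk : ContDiff ℝ 2 (pd n k u) := contDiff_pd k hu
  rw [pd_mul_pd i j hf huk, pd_comm i k (hu.of_le (by norm_num))]

end PartialDerivative

section NormalForm

variable {n : ℕ} {hn : 3 ≤ n} {b₁₂ b₁₃ b₂₃ c₀ u : (Fin n → ℝ) → ℝ}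
  {B : Fin n → Fin n → (Fin n → ℝ) → ℝ} {c : Fin n → (Fin n → ℝ) → ℝ} {y : Fin n → ℝ}

lemma pd_Pop (i : Fin n) (hb₁₂ : DifferentiableAt ℝ b₁₂ y) (hb₁₃ : DifferentiableAt ℝ b₁₃ y)
    (hb₂₃ : DifferentiableAt ℝ b₂₃ y) (hB : ∀ j k, DifferentiableAt ℝ (B j k) y)
    (hc₀ : DifferentiableAt ℝ c₀ y) (hc : ∀ j, DifferentiableAt ℝ (c j) y)
    (hu : ContDiff ℝ 3 u) :
    pd n i (Pop n hn b₁₂ b₁₃ b₂₃ B c₀ c u) y =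
      Pop n hn b₁₂ b₁₃ b₂₃ B c₀ c (pd n i u) y +
        Pop n hn (pd n i b₁₂) (pd n i b₁₃) (pd n i b₂₃) (fun j k => pd n i (B j k))
          (pd n i c₀) (fun j => pd n i (c j)) u y := by
  have hu₂ : ContDiff ℝ 2 u := hu.of_le (by norm_num)
  have hd₀ : DifferentiableAt ℝ u y := hu.differentiable (by norm_num) y
  have hd₁ (j) : DifferentiableAt ℝ (pd n j u) y :=
    (contDiff_pd (m := 1) j hu₂).differentiable one_ne_zero y
  have hd₂ (j k) : DifferentiableAt ℝ (pd n j (pd n k u)) y :=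
    (contDiff_pd (m := 1) j (contDiff_pd (m := 2) k hu)).differentiable one_ne_zero y
  unfold Pop
  simp only [← Finset.sum_filter]
  rw [pd_fun_add i (by fun_prop) (by fun_prop), pd_fun_add i (by fun_prop) (by fun_prop),
    pd_fun_add i (by fun_prop) (by fun_prop), pd_fun_add i (by fun_prop) (by fun_prop),
    pd_fun_add i (by fun_prop) (by fun_prop), pd_mul_pd_pd i _ _ hb₁₂ hu,
    pd_mul_pd_pd i _ _ hb₁₃ hu, pd_mul_pd_pd i _ _ hb₂₃ hu, pd_fun_mul i hc₀ hd₀,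
    pd_fun_sum i (fun j _ => by fun_prop), pd_fun_sum i (fun j _ => by fun_prop)]
  simp only [pd_fun_sum i (fun k _ => (hB _ k).fun_mul (hd₂ _ k)),
    pd_mul_pd_pd i _ _ (hB _ _) hu, pd_mul_pd i _ (hc _) hu₂, Finset.sum_add_distrib]
  ring

lemma Pop_sub_mul (a b₁₂' b₁₃' b₂₃' c₀' : (Fin n → ℝ) → ℝ)
    (B' : Fin n → Fin n → (Fin n → ℝ) → ℝ) (c' : Fin n → (Fin n → ℝ) → ℝ) :
    Pop n hn (b₁₂' - a * b₁₂) (b₁₃' - a * b₁₃) (b₂₃' - a * b₂₃) (fun j k => B' j k - a * B j k)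
        (c₀' - a * c₀) (fun j => c' j - a * c j) u y =
      Pop n hn b₁₂' b₁₃' b₂₃' B' c₀' c' u y - a y * Pop n hn b₁₂ b₁₃ b₂₃ B c₀ c u y := by
  simp only [Pop, ← Finset.sum_filter, Pi.sub_apply, Pi.mul_apply, sub_mul, mul_assoc,
    Finset.sum_sub_distrib, ← Finset.mul_sum]
  ring

lemma pd_Pop_sub_Pop_pd (i : Fin n) (a : (Fin n → ℝ) → ℝ)
    (hb₁₂ : DifferentiableAt ℝ b₁₂ y) (hb₁₃ : DifferentiableAt ℝ b₁₃ y)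
    (hb₂₃ : DifferentiableAt ℝ b₂₃ y) (hB : ∀ j k, DifferentiableAt ℝ (B j k) y)
    (hc₀ : DifferentiableAt ℝ c₀ y) (hc : ∀ j, DifferentiableAt ℝ (c j) y)
    (hu : ContDiff ℝ 3 u) :
    pd n i (Pop n hn b₁₂ b₁₃ b₂₃ B c₀ c u) y - Pop n hn b₁₂ b₁₃ b₂₃ B c₀ c (pd n i u) y =
      a y * Pop n hn b₁₂ b₁₃ b₂₃ B c₀ c u y +
        Pop n hn (pd n i b₁₂ - a * b₁₂) (pd n i b₁₃ - a * b₁₃) (pd n i b₂₃ - a * b₂₃)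
          (fun j k => pd n i (B j k) - a * B j k) (pd n i c₀ - a * c₀)
          (fun j => pd n i (c j) - a * c j) u y := by
  rw [pd_Pop i hb₁₂ hb₁₃ hb₂₃ hB hc₀ hc hu, Pop_sub_mul]
  ring

lemma Pop_zero_b₂₃ (hu : ContDiff ℝ 2 u) :
    Pop n hn b₁₂ b₁₃ 0 B c₀ c u y =
      (∑ j : Fin n, (if j = ⟨1, by omega⟩ then b₁₂ else if j = ⟨2, by omega⟩ then b₁₃ else 0) y *
        pd n j (pd n ⟨0, by omega⟩ u) y) +
      (∑ k : Fin n, if 3 ≤ (k : ℕ) then ∑ j : Fin n, B j k y * pd n j (pd n k u) y else 0) +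
      ((∑ j : Fin n, c j y * pd n j u y) + c₀ y * u y) := by
  have hsum : (∑ j : Fin n,
      (if j = ⟨1, by omega⟩ then b₁₂ else if j = ⟨2, by omega⟩ then b₁₃ else 0) y *
        pd n j (pd n ⟨0, by omega⟩ u) y) =
      b₁₂ y * pd n ⟨1, by omega⟩ (pd n ⟨0, by omega⟩ u) y +
        b₁₃ y * pd n ⟨2, by omega⟩ (pd n ⟨0, by omega⟩ u) y := by
    have hne : (⟨1, by omega⟩ : Fin n) ≠ ⟨2, by omega⟩ := by simp
    rw [Fintype.sum_eq_add _ _ hne fun j hj => by simp [hj.1, hj.2]]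
    simp
  rw [hsum, pd_comm _ ⟨0, by omega⟩ hu, pd_comm _ ⟨0, by omega⟩ hu]
  simp only [Pop, ← Finset.sum_filter, Pi.zero_apply, zero_mul]
  rw [Finset.sum_comm]
  ring

end NormalForm

theorem stmt_13_general {n : ℕ} (hn : 3 ≤ n) {m : WithTop ℕ∞} (i : Fin n)
    {a b₁₂ b₁₃ b₂₃ c₀ : (Fin n → ℝ) → ℝ} {B : Fin n → Fin n → (Fin n → ℝ) → ℝ}
    {c : Fin n → (Fin n → ℝ) → ℝ} (ha : ContDiff ℝ m a)
    (hb₁₂ : ContDiff ℝ (m + 1) b₁₂) (hb₁₃ : ContDiff ℝ (m + 1) b₁₃)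
    (hb₂₃ : Differentiable ℝ b₂₃) (hab : pd n i b₂₃ = a * b₂₃)
    (hB : ∀ j k, ContDiff ℝ (m + 1) (B j k)) (hc₀ : ContDiff ℝ (m + 1) c₀)
    (hc : ∀ j, ContDiff ℝ (m + 1) (c j)) :
    ∃ (ℓ₁ : Fin n → (Fin n → ℝ) → ℝ) (L : Fin n → Fin n → (Fin n → ℝ) → ℝ)
      (ℓs : Fin n → (Fin n → ℝ) → ℝ) (ℓs₀ : (Fin n → ℝ) → ℝ),
      (∀ j, ContDiff ℝ m (ℓ₁ j)) ∧ (∀ k j, ContDiff ℝ m (L k j)) ∧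
      (∀ j, ContDiff ℝ m (ℓs j)) ∧ ContDiff ℝ m ℓs₀ ∧
      ∀ u : (Fin n → ℝ) → ℝ, ContDiff ℝ 3 u → ∀ y : Fin n → ℝ,
        pd n i (Pop n hn b₁₂ b₁₃ b₂₃ B c₀ c u) y - Pop n hn b₁₂ b₁₃ b₂₃ B c₀ c (pd n i u) y =
          a y * Pop n hn b₁₂ b₁₃ b₂₃ B c₀ c u y +
          (∑ j : Fin n, ℓ₁ j y * pd n j (pd n ⟨0, by omega⟩ u) y) +
          (∑ k : Fin n, if 3 ≤ (k : ℕ) then ∑ j : Fin n, L k j y * pd n j (pd n k u) y else 0) +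
          ((∑ j : Fin n, ℓs j y * pd n j u y) + ℓs₀ y * u y) := by
  have hdiff {b : (Fin n → ℝ) → ℝ} (hb : ContDiff ℝ (m + 1) b) : Differentiable ℝ b :=
    hb.differentiable (by simp)
  have hcoeff {b : (Fin n → ℝ) → ℝ} (hb : ContDiff ℝ (m + 1) b) :
      ContDiff ℝ m (pd n i b - a * b) :=
    (contDiff_pd i hb).sub (ha.mul (hb.of_le le_self_add))
  refine ⟨fun j => if j = ⟨1, by omega⟩ then pd n i b₁₂ - a * b₁₂ else
      if j = ⟨2, by omega⟩ then pd n i b₁₃ - a * b₁₃ else 0,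
    fun k j => pd n i (B j k) - a * B j k, fun j => pd n i (c j) - a * c j,
    pd n i c₀ - a * c₀, fun j => ?_, fun k j => hcoeff (hB j k), fun j => hcoeff (hc j),
    hcoeff hc₀, fun u hu y => ?_⟩
  · dsimp only
    split_ifs
    exacts [hcoeff hb₁₂, hcoeff hb₁₃, contDiff_const]
  · rw [pd_Pop_sub_Pop_pd i a (hdiff hb₁₂ y) (hdiff hb₁₃ y) (hb₂₃ y)
      (fun j k => hdiff (hB j k) y) (hdiff hc₀ y) (fun j => hdiff (hc j) y) hu,
      sub_eq_zero.mpr hab, Pop_zero_b₂₃ (hu.of_le (by norm_num))]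
    simp only [add_assoc]

/-- **The commutator identity (5.17) in the proof of Proposition 5.13 (Bony's
commutator method):** for `P` in the normal form (5.8) with `b₂₃` nowhere
vanishing, `[∂₁, P] u = a₁·(Pu)` plus first-order operators applied to `∂₁u`,
to `∂_k u` for `k ≥ 4`, and to `u`, with smooth coefficients. -/
theorem stmt_13 (n : ℕ) (hn : 3 ≤ n)
    (b₁₂ b₁₃ b₂₃ : (Fin n → ℝ) → ℝ)
    (hb₁₂ : ContDiff ℝ (⊤ : ℕ∞) b₁₂) (hb₁₃ : ContDiff ℝ (⊤ : ℕ∞) b₁₃) (hb₂₃ : ContDiff ℝ (⊤ : ℕ∞) b₂₃)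
    (hb₂₃ne : ∀ y, b₂₃ y ≠ 0)
    (B : Fin n → Fin n → (Fin n → ℝ) → ℝ) (hB : ∀ j k, ContDiff ℝ (⊤ : ℕ∞) (B j k))
    (c₀ : (Fin n → ℝ) → ℝ) (hc₀ : ContDiff ℝ (⊤ : ℕ∞) c₀)
    (c : Fin n → (Fin n → ℝ) → ℝ) (hc : ∀ j, ContDiff ℝ (⊤ : ℕ∞) (c j)) :
    ∃ (a₁ : (Fin n → ℝ) → ℝ) (ℓ₁ : Fin n → (Fin n → ℝ) → ℝ) (ℓ₁₀ : (Fin n → ℝ) → ℝ)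
      (L : Fin n → Fin n → (Fin n → ℝ) → ℝ) (L₀ : Fin n → (Fin n → ℝ) → ℝ)
      (ℓs : Fin n → (Fin n → ℝ) → ℝ) (ℓs₀ : (Fin n → ℝ) → ℝ),
      ContDiff ℝ (⊤ : ℕ∞) a₁ ∧ (∀ i, ContDiff ℝ (⊤ : ℕ∞) (ℓ₁ i)) ∧ ContDiff ℝ (⊤ : ℕ∞) ℓ₁₀ ∧
      (∀ k i, ContDiff ℝ (⊤ : ℕ∞) (L k i)) ∧ (∀ k, ContDiff ℝ (⊤ : ℕ∞) (L₀ k)) ∧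
      (∀ i, ContDiff ℝ (⊤ : ℕ∞) (ℓs i)) ∧ ContDiff ℝ (⊤ : ℕ∞) ℓs₀ ∧
      ∀ u : (Fin n → ℝ) → ℝ, ContDiff ℝ (⊤ : ℕ∞) u → ∀ y : Fin n → ℝ,
        pd n ⟨0, by omega⟩ (Pop n hn b₁₂ b₁₃ b₂₃ B c₀ c u) y -
            Pop n hn b₁₂ b₁₃ b₂₃ B c₀ c (pd n ⟨0, by omega⟩ u) y =
          a₁ y * Pop n hn b₁₂ b₁₃ b₂₃ B c₀ c u y +
          ((∑ i : Fin n, ℓ₁ i y * pd n i (pd n ⟨0, by omega⟩ u) y) +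
            ℓ₁₀ y * pd n ⟨0, by omega⟩ u y) +
          (∑ k : Fin n, if 3 ≤ (k : ℕ) then
            ((∑ i : Fin n, L k i y * pd n i (pd n k u) y) + L₀ k y * pd n k u y) else 0) +
          ((∑ i : Fin n, ℓs i y * pd n i u y) + ℓs₀ y * u y) := by
  have ha : ContDiff ℝ (⊤ : ℕ∞) (pd n ⟨0, by omega⟩ b₂₃ / b₂₃) :=
    (contDiff_pd _ hb₂₃).div hb₂₃ hb₂₃ne
  have hab : pd n ⟨0, by omega⟩ b₂₃ = pd n ⟨0, by omega⟩ b₂₃ / b₂₃ * b₂₃ :=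
    funext fun y => (div_mul_cancel₀ _ (hb₂₃ne y)).symm
  obtain ⟨ℓ₁, L, ℓs, ℓs₀, hℓ₁, hL, hℓs, hℓs₀, hcomm⟩ := stmt_13_general hn _ ha hb₁₂ hb₁₃
    (hb₂₃.differentiable (by simp)) hab hB hc₀ hc
  exact ⟨_, ℓ₁, 0, L, 0, ℓs, ℓs₀, ha, hℓ₁, contDiff_const, hL, fun _ => contDiff_const, hℓs, hℓs₀,
    fun u hu y => by simpa using hcomm u (contDiff_infty.mp hu 3) y⟩
end
end

section
/- Let m < −1, let a ∈ S^m(ℝ), and let k be the unique nonnegative integer with −m−2 ≤ k < −m−1. Then there exist b ∈ S^{m+k}(ℝ) and a compactly supported C^∞ function c : ℝ → ℂ such that a = i^k b^{(k)} + c. Consequently, setting u(x) = ∫_ℝ e^{ixη} a(η) dη and w(x) = ∫_ℝ e^{ixη} b(η) dη (both integrals absolutely convergent, since m < −1 and m+k < −1), the function x ↦ u(x) − x^k w(x) is C^∞ on ℝ. -/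
open MeasureTheory

noncomputable section

/-- The symbol class `S^m(ℝ)`: `a` is smooth and `|a^{(k)}(s)| ≤ C_k (1+|s|)^{m-k}`. -/
def IsSymbol (m : ℝ) (a : ℝ → ℂ) : Prop :=
  ContDiff ℝ (⊤ : ℕ∞) a ∧ ∀ k : ℕ, ∃ C : ℝ, ∀ s : ℝ,
    ‖iteratedDeriv k a s‖ ≤ C * (1 + |s|) ^ (m - k)

/-!
A symbol `f` of order `m < -1` with vanishing integral has a primitive in `S^{m+1}`: near `+∞` the
primitive `∫_{-∞}^s f` equals minus the tail `∫_s^∞ f`, so it decays at both ends. Subtracting a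
bump function of the same integral therefore writes any `a ∈ S^m` as `b' + c` with `b ∈ S^{m+1}` and
`c ∈ C_c^∞`. This can be repeated as long as the order stays below `-1`, and gives
`a = i^k b^{(k)} + c`. Integrating `e^{ixη}` against `i^k b^{(k)}` turns it into `x^k w(x)`, and `c`
contributes the Fourier transform of a compactly supported function.
-/

open Set
open scoped ContDiff FourierTransform

section Tails

theorem integral_Ioi_add_rpow_of_lt {m c s : ℝ} (hm : m < -1) (hs : 0 < s + c) :
    ∫ t in Ioi s, (t + c) ^ m = (s + c) ^ (m + 1) / (-(m + 1)) := by
  have shift := (measurePreserving_add_right volume c).setIntegral_preimage_emb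
    (measurableEmbedding_addRight c) (fun t : ℝ => t ^ m) (Ioi (s + c))
  rw [preimage_add_const_Ioi, add_sub_cancel_right] at shift
  rw [shift, integral_Ioi_rpow_of_lt hm hs, neg_div, div_neg]

variable {E : Type*} [NormedAddCommGroup E] [NormedSpace ℝ E]

theorem norm_integral_Ioi_le_of_norm_le_rpow {f : ℝ → E} {m c s C : ℝ} (hm : m < -1)
    (hs : 0 < s + c) (hf : ∀ t > s, ‖f t‖ ≤ C * (t + c) ^ m) :
    ‖∫ t in Ioi s, f t‖ ≤ C / (-(m + 1)) * (s + c) ^ (m + 1) := by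
  have hint : IntegrableOn (fun t : ℝ => C * (t + c) ^ m) (Ioi s) :=
    (integrableOn_add_rpow_Ioi_of_lt hm (by linarith)).const_mul C
  calc ‖∫ t in Ioi s, f t‖ ≤ ∫ t in Ioi s, C * (t + c) ^ m :=
        norm_integral_le_of_norm_le hint (ae_restrict_of_forall_mem measurableSet_Ioi hf)
    _ = C / (-(m + 1)) * (s + c) ^ (m + 1) := by
        rw [integral_const_mul, integral_Ioi_add_rpow_of_lt hm hs, mul_div_left_comm, mul_comm]

theorem norm_integral_Iic_le_of_integral_eq_zero {f : ℝ → E} {m C : ℝ} (hm : m < -1)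
    (hint : Integrable f) (hzero : ∫ t, f t = 0) (hf : ∀ t, ‖f t‖ ≤ C * (1 + |t|) ^ m) (s : ℝ) :
    ‖∫ t in Iic s, f t‖ ≤ C / (-(m + 1)) * (1 + |s|) ^ (m + 1) := by
  rcases le_total 0 s with hs | hs
  · have hIic : ∫ t in Iic s, f t = -∫ t in Ioi s, f t := by
      rw [eq_neg_iff_add_eq_zero, ← hzero]
      exact intervalIntegral.integral_Iic_add_Ioi hint.integrableOn hint.integrableOn
    rw [hIic, norm_neg, abs_of_nonneg hs, add_comm 1 s]
    refine norm_integral_Ioi_le_of_norm_le_rpow hm (by linarith) fun t ht => ?_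
    simpa only [abs_of_nonneg (hs.trans ht.le), add_comm] using hf t
  · have hIic : ∫ t in Iic s, f t = ∫ t in Ioi (-s), f (-t) := by
      rw [integral_comp_neg_Ioi, neg_neg]
    rw [hIic, abs_of_nonpos hs, add_comm 1 (-s)]
    refine norm_integral_Ioi_le_of_norm_le_rpow hm (by linarith) fun t ht => ?_
    have ht₀ : 0 ≤ t := (neg_nonneg.2 hs).trans ht.le
    simpa only [abs_neg, abs_of_nonneg ht₀, add_comm] using hf (-t)

theorem hasDerivAt_integral_Iic [CompleteSpace E] {f : ℝ → E} {s : ℝ} (hint : Integrable f)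
    (hf : ContinuousAt f s) : HasDerivAt (fun x => ∫ t in Iic x, f t) (f s) s := by
  have hsplit : (fun x => ∫ t in Iic x, f t) =
      fun x => (∫ t in Iic s, f t) + ∫ t in s..x, f t := by
    ext x
    rw [← intervalIntegral.integral_Iic_sub_Iic hint.integrableOn hint.integrableOn,
      add_sub_cancel]
  rw [hsplit]
  exact (intervalIntegral.integral_hasDerivAt_right hint.intervalIntegrable
    hint.aestronglyMeasurable.stronglyMeasurableAtFilter hf).const_add _

end Tails

section CompactSupport

variable {E : Type*} [NormedAddCommGroup E] [NormedSpace ℝ E]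

theorem hasCompactSupport_iteratedDeriv {f : ℝ → E} (hf : HasCompactSupport f) (n : ℕ) :
    HasCompactSupport (iteratedDeriv n f) := by
  rw [iteratedDeriv_eq_equiv_comp]
  exact (hf.iteratedFDeriv n).comp_left (map_zero _)

theorem exists_contDiff_hasCompactSupport_integral_eq [CompleteSpace E] (v : E) :
    ∃ c : ℝ → E, ContDiff ℝ ∞ c ∧ HasCompactSupport c ∧ ∫ t, c t = v := by
  let φ : ContDiffBump (0 : ℝ) := default
  refine ⟨fun t => φ.normed volume t • v, φ.contDiff_normed.smul contDiff_const,
    φ.hasCompactSupport_normed.smul_right, ?_⟩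
  rw [integral_smul_const, φ.integral_normed, one_smul]

end CompactSupport

namespace IsSymbol

variable {m : ℝ} {a b : ℝ → ℂ}

theorem sub (ha : IsSymbol m a) (hb : IsSymbol m b) : IsSymbol m (a - b) := by
  refine ⟨ha.1.sub hb.1, fun n => ?_⟩
  obtain ⟨A, hA⟩ := ha.2 n
  obtain ⟨B, hB⟩ := hb.2 n
  refine ⟨A + B, fun s => ?_⟩
  rw [iteratedDeriv_sub (ha.1.of_le (mod_cast le_top)).contDiffAt
    (hb.1.of_le (mod_cast le_top)).contDiffAt, add_mul]
  exact (norm_sub_le _ _).trans (add_le_add (hA s) (hB s))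

theorem const_mul (ha : IsSymbol m a) (z : ℂ) : IsSymbol m (fun s => z * a s) := by
  refine ⟨contDiff_const.mul ha.1, fun n => ?_⟩
  obtain ⟨C, hC⟩ := ha.2 n
  refine ⟨‖z‖ * C, fun s => ?_⟩
  rw [iteratedDeriv_const_mul_field, norm_mul, mul_assoc]
  exact mul_le_mul_of_nonneg_left (hC s) (norm_nonneg z)

theorem of_hasCompactSupport (m : ℝ) (ha : ContDiff ℝ ∞ a) (hsupp : HasCompactSupport a) :
    IsSymbol m a := by
  refine ⟨ha, fun n => ?_⟩
  let weight : ℝ → ℝ := fun s => (1 + |s|) ^ (-(m - n))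
  have hweight : Continuous weight :=
    Continuous.rpow_const (by fun_prop) fun s => Or.inl (by positivity)
  obtain ⟨C, hC⟩ :=
    (hasCompactSupport_iteratedDeriv hsupp n).smul_left.exists_bound_of_continuous
      (hweight.smul (ha.continuous_iteratedDeriv n (mod_cast le_top)))
  refine ⟨C, fun s => ?_⟩
  have hpos : 0 < 1 + |s| := by positivity
  have hs : ‖(1 + |s|) ^ (-(m - n)) • iteratedDeriv n a s‖ ≤ C := hC s
  rwa [norm_smul, Real.norm_of_nonneg (by positivity), Real.rpow_neg hpos.le,
    inv_mul_le_iff₀' (by positivity)] at hs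

theorem integrable_iteratedDeriv (ha : IsSymbol m a) (hm : m < -1) (n : ℕ) :
    Integrable (iteratedDeriv n a) := by
  obtain ⟨C, hC⟩ := ha.2 n
  have hdecay : Integrable fun s : ℝ => (1 + ‖s‖) ^ (-(n - m)) := by
    refine integrable_one_add_norm ?_
    have : (0 : ℝ) ≤ n := n.cast_nonneg
    rw [Module.finrank_self]
    push_cast
    linarith
  refine (hdecay.const_mul C).mono'
    (ha.1.continuous_iteratedDeriv n (mod_cast le_top)).aestronglyMeasurable (ae_of_all _ ?_)
  simpa only [neg_sub, Real.norm_eq_abs] using hC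

theorem integrable (ha : IsSymbol m a) (hm : m < -1) : Integrable a := by
  simpa only [iteratedDeriv_zero] using ha.integrable_iteratedDeriv hm 0

theorem of_hasDerivAt (ha : IsSymbol m a) (hderiv : ∀ s, HasDerivAt b (a s) s)
    (hb : ∃ C : ℝ, ∀ s, ‖b s‖ ≤ C * (1 + |s|) ^ (m + 1)) : IsSymbol (m + 1) b := by
  have hderiv_eq : deriv b = a := funext fun s => (hderiv s).deriv
  refine ⟨contDiff_infty_iff_deriv.2 ⟨fun s => (hderiv s).differentiableAt, hderiv_eq ▸ ha.1⟩, ?_⟩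
  rintro (_ | n)
  · simpa only [iteratedDeriv_zero, Nat.cast_zero, sub_zero] using hb
  · simpa only [iteratedDeriv_succ', hderiv_eq, Nat.cast_succ, add_sub_add_right_eq_sub]
      using ha.2 n

theorem integral_Iic (ha : IsSymbol m a) (hm : m < -1) (hzero : ∫ t, a t = 0) :
    IsSymbol (m + 1) (fun s => ∫ t in Iic s, a t) := by
  have hint := ha.integrable hm
  obtain ⟨C, hC⟩ := ha.2 0
  simp only [iteratedDeriv_zero, Nat.cast_zero, sub_zero] at hC
  exact ha.of_hasDerivAt (fun s => hasDerivAt_integral_Iic hint ha.1.continuous.continuousAt)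
    ⟨_, norm_integral_Iic_le_of_integral_eq_zero hm hint hzero hC⟩

theorem exists_eq_deriv_add (ha : IsSymbol m a) (hm : m < -1) :
    ∃ b c : ℝ → ℂ, IsSymbol (m + 1) b ∧ ContDiff ℝ ∞ c ∧ HasCompactSupport c ∧
      a = deriv b + c := by
  obtain ⟨c, hc, hc_supp, hc_int⟩ := exists_contDiff_hasCompactSupport_integral_eq (∫ t, a t)
  have hc_symb : IsSymbol m c := of_hasCompactSupport m hc hc_supp
  have hac : IsSymbol m (a - c) := ha.sub hc_symb
  have hzero : ∫ t, (a - c) t = 0 := by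
    rw [integral_sub' (ha.integrable hm) (hc_symb.integrable hm), hc_int, sub_self]
  refine ⟨fun s => ∫ t in Iic s, (a - c) t, c, hac.integral_Iic hm hzero, hc, hc_supp, ?_⟩
  have hderiv : deriv (fun s => ∫ t in Iic s, (a - c) t) = a - c := funext fun s =>
    (hasDerivAt_integral_Iic (hac.integrable hm) hac.1.continuous.continuousAt).deriv
  rw [hderiv, sub_add_cancel]

theorem exists_eq_iteratedDeriv_add (ha : IsSymbol m a) (k : ℕ) (hk : m + k < 0) :
    ∃ b c : ℝ → ℂ, IsSymbol (m + k) b ∧ ContDiff ℝ ∞ c ∧ HasCompactSupport c ∧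
      a = iteratedDeriv k b + c := by
  induction k with
  | zero => exact ⟨a, 0, by simpa using ha, contDiff_const, .zero, by simp⟩
  | succ k ih =>
    push_cast at hk
    obtain ⟨b, c, hb, hc, hc_supp, hab⟩ := ih (by linarith)
    obtain ⟨d, e, hd, he, he_supp, hbd⟩ := hb.exists_eq_deriv_add (by linarith)
    have hd' : ContDiff ℝ ∞ (deriv d) := (contDiff_infty_iff_deriv.1 hd.1).2
    refine ⟨d, iteratedDeriv k e + c, by simpa [add_assoc] using hd, ?_,
      (hasCompactSupport_iteratedDeriv he_supp k).add hc_supp, ?_⟩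
    · rw [iteratedDeriv_eq_iterate]
      exact (he.iterate_deriv k).add hc
    · have hbk : iteratedDeriv k b = iteratedDeriv (k + 1) d + iteratedDeriv k e := by
        ext s
        rw [hbd, iteratedDeriv_add (hd'.of_le (mod_cast le_top)).contDiffAt
          (he.of_le (mod_cast le_top)).contDiffAt, ← iteratedDeriv_succ', Pi.add_apply]
      rw [hab, hbk, add_assoc]

end IsSymbol

section OscIntegral

variable {E : Type*} [NormedAddCommGroup E] [NormedSpace ℂ E]

/-- The Fourier synthesis `x ↦ ∫ e^{ixη} f(η) dη` of a density `f` in frequency. In contrast to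
Mathlib's `𝓕⁻`, the phase carries no factor `2π`. -/
def oscIntegral (f : ℝ → E) (x : ℝ) : E :=
  ∫ η : ℝ, Complex.exp (Complex.I * ((x * η : ℝ) : ℂ)) • f η

theorem oscIntegral_eq_fourier (f : ℝ → E) (x : ℝ) :
    oscIntegral f x = 𝓕 f (-(x / (2 * Real.pi))) := by
  rw [oscIntegral, Real.fourier_real_eq_integral_exp_smul]
  congr! 4 with η
  rw [mul_comm]
  congr 2
  field_simp

theorem integrable_exp_smul {f : ℝ → E} (hf : Integrable f) (x : ℝ) :
    Integrable fun η : ℝ => Complex.exp (Complex.I * ((x * η : ℝ) : ℂ)) • f η := by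
  refine hf.bdd_smul 1 (by fun_prop) (ae_of_all _ fun η => ?_)
  rw [mul_comm, Complex.norm_exp_ofReal_mul_I]

theorem oscIntegral_add {f g : ℝ → E} (hf : Integrable f) (hg : Integrable g) :
    oscIntegral (f + g) = oscIntegral f + oscIntegral g := by
  ext x
  simp only [oscIntegral, Pi.add_apply, smul_add]
  exact integral_add (integrable_exp_smul hf x) (integrable_exp_smul hg x)

theorem oscIntegral_const_smul (z : ℂ) (f : ℝ → E) :
    oscIntegral (z • f) = z • oscIntegral f := by
  ext x
  simp only [oscIntegral, Pi.smul_apply, smul_comm _ z, integral_smul]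

theorem oscIntegral_iteratedDeriv {f : ℝ → E} {N : ℕ∞} {k : ℕ} (hf : ContDiff ℝ N f)
    (hint : ∀ n : ℕ, n ≤ N → Integrable (iteratedDeriv n f)) (hk : k ≤ N) (x : ℝ) :
    oscIntegral (iteratedDeriv k f) x = (-Complex.I * x) ^ k • oscIntegral f x := by
  have hfreq : 2 * Real.pi * Complex.I * ((-(x / (2 * Real.pi)) : ℝ) : ℂ) = -Complex.I * x := by
    have : (Real.pi : ℂ) ≠ 0 := mod_cast Real.pi_ne_zero
    push_cast
    field_simp
  simp only [oscIntegral_eq_fourier, Real.fourier_iteratedDeriv hf hint hk, hfreq]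

theorem contDiff_oscIntegral {f : ℝ → E} (hf : Continuous f) (hsupp : HasCompactSupport f) :
    ContDiff ℝ ∞ (oscIntegral f) := by
  have hfourier : ContDiff ℝ ∞ (𝓕 f) := Real.contDiff_fourier fun n _ =>
    Continuous.integrable_of_hasCompactSupport (by fun_prop) hsupp.norm.mul_left
  rw [funext (oscIntegral_eq_fourier f)]
  exact hfourier.comp (by fun_prop)

theorem oscIntegral_sub_pow_smul {b c : ℝ → E} {N : ℕ∞} {k : ℕ} (hb : ContDiff ℝ N b)
    (hint : ∀ n : ℕ, n ≤ N → Integrable (iteratedDeriv n b)) (hk : k ≤ N) (hc : Integrable c)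
    (x : ℝ) :
    oscIntegral (Complex.I ^ k • iteratedDeriv k b + c) x - (x : ℂ) ^ k • oscIntegral b x =
      oscIntegral c x := by
  have hx : Complex.I * (-Complex.I * x) = x := by
    rw [← mul_assoc, mul_neg, Complex.I_mul_I, neg_neg, one_mul]
  rw [oscIntegral_add ((hint k hk).smul _) hc, oscIntegral_const_smul, Pi.add_apply,
    Pi.smul_apply, oscIntegral_iteratedDeriv hb hint hk, smul_smul, ← mul_pow, hx,
    add_sub_cancel_left]

end OscIntegral

theorem stmt_15_general (m : ℝ) (a : ℝ → ℂ) (ha : IsSymbol m a) (k : ℕ)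
    (hk : (k : ℝ) < -m - 1) :
    ∃ b c : ℝ → ℂ, IsSymbol (m + k) b ∧ ContDiff ℝ (⊤ : ℕ∞) c ∧ HasCompactSupport c ∧
      (∀ η : ℝ, a η = Complex.I ^ k * iteratedDeriv k b η + c η) ∧
      ContDiff ℝ (⊤ : ℕ∞) (fun x : ℝ =>
        (∫ η : ℝ, Complex.exp (Complex.I * ((x * η : ℝ) : ℂ)) * a η ∂volume) -
          (x : ℂ) ^ k * ∫ η : ℝ, Complex.exp (Complex.I * ((x * η : ℝ) : ℂ)) * b η ∂volume) := by
  have hmk : m + k < -1 := by linarith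
  obtain ⟨b₀, c, hb₀, hc, hc_supp, hab₀⟩ := ha.exists_eq_iteratedDeriv_add k (by linarith)
  let b : ℝ → ℂ := fun η => (Complex.I ^ k)⁻¹ * b₀ η
  have hb : IsSymbol (m + k) b := hb₀.const_mul _
  have hab : a = Complex.I ^ k • iteratedDeriv k b + c := by
    ext η
    simp [hab₀, b, iteratedDeriv_const_mul_field]
  refine ⟨b, c, hb, hc, hc_supp, congrFun hab, ?_⟩
  have hosc : (fun x : ℝ => oscIntegral a x - (x : ℂ) ^ k • oscIntegral b x) = oscIntegral c := by
    rw [hab]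
    exact funext <| oscIntegral_sub_pow_smul hb.1 (fun n _ => hb.integrable_iteratedDeriv hmk n)
      le_top (hc.continuous.integrable_of_hasCompactSupport hc_supp)
  exact hosc ▸ contDiff_oscIntegral hc.continuous hc_supp

/-- **One-dimensional core of the Piriou/Rauch–Reed decomposition (4.4):**
for `a ∈ S^m(ℝ)` with `m < -1` and `k` the unique nonnegative integer with
`-m-2 ≤ k < -m-1`, one can write `a = i^k b^{(k)} + c` with `b ∈ S^{m+k}(ℝ)`
and `c` smooth with compact support; consequently
`u(x) - x^k w(x)` is `C^∞`, where `u(x) = ∫ e^{ixη} a(η) dη` and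
`w(x) = ∫ e^{ixη} b(η) dη`. -/
theorem stmt_15 (m : ℝ) (hm : m < -1) (a : ℝ → ℂ) (ha : IsSymbol m a)
    (k : ℕ) (hk₁ : -m - 2 ≤ (k : ℝ)) (hk₂ : (k : ℝ) < -m - 1) :
    ∃ b c : ℝ → ℂ, IsSymbol (m + k) b ∧ ContDiff ℝ (⊤ : ℕ∞) c ∧ HasCompactSupport c ∧
      (∀ η : ℝ, a η = Complex.I ^ k * iteratedDeriv k b η + c η) ∧
      ContDiff ℝ (⊤ : ℕ∞) (fun x : ℝ =>
        (∫ η : ℝ, Complex.exp (Complex.I * ((x * η : ℝ) : ℂ)) * a η ∂volume) -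
          (x : ℂ) ^ k * ∫ η : ℝ, Complex.exp (Complex.I * ((x * η : ℝ) : ℂ)) * b η ∂volume) :=
  stmt_15_general m a ha k hk₂
end
end
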